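/- arXiv:2305.19046 — 2 statements merged into one kernel-verified Lean document; each statement's English description precedes it below -/
import Mathlib

section
/- Let β ∈ (0,n), p ∈ (1,∞), and f ∈ L^p(H^β_∞). Then there exists a constant C = C(β,n,p) > 0 such that ∫ (M_{H^β_∞} f)^p dH^β_∞ ≤ C ∫ |f|^p dH^β_∞. -/
open scoped ENNReal
open Metric Set MeasureTheory

noncomputable section

/-- `ℝⁿ` as Euclidean space. -/
abbrev Rn (n : ℕ) := EuclideanSpace ℝ (Fin n)

/-- The Choquet integral of a nonnegative function `g` with respect to a
(monotone) set function `C`: `∫ g dC := ∫_0^∞ C({g > t}) dt`. -/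
noncomputable def choquet {X : Type*} (C : Set X → ℝ≥0∞) (g : X → ℝ≥0∞) : ℝ≥0∞ :=
  ∫⁻ t in Ioi (0 : ℝ), C {x | ENNReal.ofReal t < g x}

/-- The Choquet integral of `g` restricted to a set `A`. -/
noncomputable def choquetOn {X : Type*} (C : Set X → ℝ≥0∞) (A : Set X) (g : X → ℝ≥0∞) : ℝ≥0∞ :=
  ∫⁻ t in Ioi (0 : ℝ), C {x | x ∈ A ∧ ENNReal.ofReal t < g x}

/-- The `L^∞(C)` norm: `inf {λ > 0 : C({|f| > λ}) = 0}` (formulated in `ℝ≥0∞`). -/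
noncomputable def choquetEssSup {X : Type*} (C : Set X → ℝ≥0∞) (f : X → ℝ) : ℝ≥0∞ :=
  sInf {l : ℝ≥0∞ | C {x | l < ENNReal.ofReal |f x|} = 0}

/-- `C`-quasicontinuity of a function `f`. -/
def QuasiCont {X : Type*} [TopologicalSpace X] (C : Set X → ℝ≥0∞) (f : X → ℝ) : Prop :=
  ∀ ε : ℝ≥0∞, 0 < ε → ∃ U : Set X, IsOpen U ∧ C U < ε ∧ ContinuousOn f Uᶜ

/-- Membership in the capacitary space `L^p(C)`: `C`-quasicontinuous with
finite `p`-th power Choquet integral. -/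
def MemChoquetLp {X : Type*} [TopologicalSpace X] (C : Set X → ℝ≥0∞) (p : ℝ) (f : X → ℝ) : Prop :=
  QuasiCont C f ∧ choquet C (fun x => ENNReal.ofReal |f x| ^ p) < ∞

/-- The normalization constant `ω_β = π^{β/2}/Γ(β/2+1)`. -/
noncomputable def omegaC (β : ℝ) : ℝ≥0∞ :=
  ENNReal.ofReal (Real.pi ^ (β / 2) / Real.Gamma (β / 2 + 1))

/-- The `β`-dimensional Hausdorff content `H^β_∞`, defined via countable
coverings by balls: `inf {∑ ω_β r_i^β : E ⊆ ⋃ B(x_i, r_i)}`. -/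
noncomputable def hContent (n : ℕ) (β : ℝ) (E : Set (Rn n)) : ℝ≥0∞ :=
  ⨅ (c : ℕ → Rn n × ℝ) (_ : E ⊆ ⋃ i, ball (c i).1 (c i).2),
    ∑' i, omegaC β * ENNReal.ofReal ((c i).2 ^ β)

/-- The centered Hausdorff content maximal function
`M_{H^β_∞} g(x) := sup_{r>0} (1/(ω_β r^β)) ∫_{B(x,r)} g dH^β_∞`. -/
noncomputable def maximalH (n : ℕ) (β : ℝ) (g : Rn n → ℝ≥0∞) (x : Rn n) : ℝ≥0∞ :=
  ⨆ (r : ℝ) (_ : 0 < r),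
    (omegaC β * ENNReal.ofReal (r ^ β))⁻¹ * choquetOn (hContent n β) (ball x r) g
/-!
Truncating `g` at height `s` gives `M g ≤ s + M (g 1_{g > s})`, so the strong type `(p, p)` estimate
follows from the weak type `(1, 1)` estimate by Marcinkiewicz interpolation.

The weak type estimate cannot be read off from the Vitali covering lemma, because the content is not
additive on disjoint balls. From a disjoint family of balls one instead extracts a maximal *packed*
subfamily, whose members inside any ball `B` have total weight at most twice that of `B`. Packing
makes the content almost additive along the subfamily, while maximality puts every ball of the
original family inside one that the subfamily saturates; a second Vitali selection among the
saturated balls then bounds the content of the whole family by the total weight of the subfamily.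
-/

open scoped NNReal

/-! ### Choquet integrals -/

section Choquet

variable {X : Type*} {C : Set X → ℝ≥0∞}

lemma antitone_superlevel (hC : Monotone C) (g : X → ℝ≥0∞) :
    Antitone fun t : ℝ => C {x | ENNReal.ofReal t < g x} :=
  fun _ _ hst => hC fun _ hx => (ENNReal.ofReal_le_ofReal hst).trans_lt hx

lemma choquetOn_le_choquet (hC : Monotone C) (A : Set X) (g : X → ℝ≥0∞) :
    choquetOn C A g ≤ choquet C g :=
  lintegral_mono fun _ => hC fun _ hx => hx.2

lemma tsum_choquetOn_le {ι : Type*} (hC : Monotone C) {B : ι → Set X} {K : ℝ≥0}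
    (hB : ∀ E, ∑' i, C (B i ∩ E) ≤ K * C E) (g : X → ℝ≥0∞) :
    ∑' i, choquetOn C (B i) g ≤ K * choquet C g := by
  have hmeas (i : ι) : Measurable fun t : ℝ => C (B i ∩ {x | ENNReal.ofReal t < g x}) :=
    (antitone_superlevel (C := fun E => C (B i ∩ E))
      (fun _ _ h => hC (inter_subset_inter_right _ h)) g).measurable
  rw [ENNReal.tsum_eq_iSup_sum]
  refine iSup_le fun F => ?_
  calc ∑ i ∈ F, choquetOn C (B i) g
      = ∫⁻ t in Ioi (0 : ℝ), ∑ i ∈ F, C (B i ∩ {x | ENNReal.ofReal t < g x}) :=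
        (lintegral_finsetSum F fun i _ => hmeas i).symm
    _ ≤ ∫⁻ t in Ioi (0 : ℝ), K * C {x | ENNReal.ofReal t < g x} :=
        lintegral_mono fun t => (ENNReal.sum_le_tsum F).trans (hB _)
    _ = K * choquet C g := lintegral_const_mul' _ _ ENNReal.coe_ne_top

lemma image_mul_rpow_Ioi {a p : ℝ} (ha : 0 < a) (hp : 0 < p) :
    (fun s : ℝ => (a * s) ^ p) '' Ioi 0 = Ioi 0 := by
  refine Subset.antisymm (image_subset_iff.2 fun s hs => Real.rpow_pos_of_pos (mul_pos ha hs) p)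
    fun t (ht : 0 < t) => ⟨t ^ p⁻¹ / a, div_pos (Real.rpow_pos_of_pos ht _) ha, ?_⟩
  simp only [mul_div_cancel₀ _ ha.ne', Real.rpow_inv_rpow ht.le hp.ne']

lemma hasDerivAt_mul_rpow {a s : ℝ} (ha : 0 < a) (hs : 0 < s) (p : ℝ) :
    HasDerivAt (fun s : ℝ => (a * s) ^ p) (a ^ p * p * s ^ (p - 1)) s := by
  have hlin : HasDerivAt (fun s => a * s) a s := by simpa using (hasDerivAt_id s).const_mul a
  convert hlin.rpow_const (p := p) (.inl (mul_pos ha hs).ne') using 1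
  rw [Real.mul_rpow ha.le hs.le, Real.rpow_sub_one ha.ne']
  field_simp

lemma choquet_rpow (C : Set X → ℝ≥0∞) (g : X → ℝ≥0∞) {a p : ℝ} (ha : 0 < a) (hp : 0 < p) :
    choquet C (fun x => g x ^ p) = ENNReal.ofReal (a ^ p * p) *
      ∫⁻ s in Ioi (0 : ℝ), ENNReal.ofReal (s ^ (p - 1)) * C {x | ENNReal.ofReal (a * s) < g x} := by
  have hmono : MonotoneOn (fun s : ℝ => (a * s) ^ p) (Ioi 0) := fun s hs t _ hst =>
    Real.rpow_le_rpow (mul_pos ha hs).le (mul_le_mul_of_nonneg_left hst ha.le) hp.le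
  calc choquet C (fun x => g x ^ p)
      = ∫⁻ t in (fun s : ℝ => (a * s) ^ p) '' Ioi 0, C {x | ENNReal.ofReal t < g x ^ p} := by
        rw [image_mul_rpow_Ioi ha hp, choquet]
    _ = ∫⁻ s in Ioi (0 : ℝ), ENNReal.ofReal (a ^ p * p * s ^ (p - 1)) *
          C {x | ENNReal.ofReal ((a * s) ^ p) < g x ^ p} :=
        lintegral_image_eq_lintegral_deriv_mul_of_monotoneOn measurableSet_Ioi
          (fun s hs => (hasDerivAt_mul_rpow ha hs p).hasDerivWithinAt) hmono _
    _ = ∫⁻ s in Ioi (0 : ℝ), ENNReal.ofReal (a ^ p * p) * (ENNReal.ofReal (s ^ (p - 1)) *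
          C {x | ENNReal.ofReal (a * s) < g x}) := by
        refine setLIntegral_congr_fun measurableSet_Ioi fun s (hs : 0 < s) => ?_
        simp only [← ENNReal.ofReal_rpow_of_nonneg (mul_pos ha hs).le hp.le,
          ENNReal.rpow_lt_rpow_iff hp]
        rw [ENNReal.ofReal_mul (by positivity), mul_assoc]
    _ = _ := lintegral_const_mul' _ _ ENNReal.ofReal_ne_top

/-- The part `g 1_{g > s}` of a function above the level `s`, used for truncation. -/
def upperPart (s : ℝ) (g : X → ℝ≥0∞) : X → ℝ≥0∞ :=
  indicator {x | ENNReal.ofReal s < g x} g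

lemma lt_upperPart_iff {s t : ℝ} {g : X → ℝ≥0∞} {x : X} :
    ENNReal.ofReal t < upperPart s g x ↔ ENNReal.ofReal s < g x ∧ ENNReal.ofReal t < g x := by
  by_cases h : ENNReal.ofReal s < g x <;> simp [upperPart, indicator, h]

lemma setLIntegral_Ioi_le {s : ℝ} (hs : 0 ≤ s) {F : ℝ → ℝ≥0∞} {b : ℝ≥0∞}
    (hF : ∀ t ∈ Ioc 0 s, F t ≤ b) :
    ∫⁻ t in Ioi (0 : ℝ), F t ≤ ENNReal.ofReal s * b + ∫⁻ t in Ioi s, F t := by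
  calc ∫⁻ t in Ioi (0 : ℝ), F t ≤ (∫⁻ t in Ioc 0 s, F t) + ∫⁻ t in Ioi s, F t := by
        rw [← Ioc_union_Ioi_eq_Ioi hs]
        exact lintegral_union_le F _ _
    _ ≤ (∫⁻ _ in Ioc 0 s, b) + ∫⁻ t in Ioi s, F t := by
        exact add_le_add_left (setLIntegral_mono' measurableSet_Ioc hF) _
    _ = ENNReal.ofReal s * b + ∫⁻ t in Ioi s, F t := by
        rw [setLIntegral_const, Real.volume_Ioc, sub_zero, mul_comm]

lemma choquet_upperPart_le (hC : Monotone C) {s : ℝ} (hs : 0 ≤ s) (g : X → ℝ≥0∞) :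
    choquet C (upperPart s g) ≤ ENNReal.ofReal s * C {x | ENNReal.ofReal s < g x} +
      ∫⁻ t in Ioi s, C {x | ENNReal.ofReal t < g x} := by
  refine (setLIntegral_Ioi_le hs fun t _ => hC fun x hx => (lt_upperPart_iff.1 hx).1).trans ?_
  exact add_le_add_right (lintegral_mono fun t => hC fun x hx => (lt_upperPart_iff.1 hx).2) _

lemma choquetOn_le_add_choquetOn_upperPart (hC : Monotone C) {s : ℝ} (hs : 0 ≤ s) (A : Set X)
    (g : X → ℝ≥0∞) :
    choquetOn C A g ≤ ENNReal.ofReal s * C A + choquetOn C A (upperPart s g) := by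
  refine (setLIntegral_Ioi_le hs fun t _ => hC fun x hx => hx.1).trans ?_
  gcongr
  calc ∫⁻ t in Ioi s, C {x | x ∈ A ∧ ENNReal.ofReal t < g x}
      ≤ ∫⁻ t in Ioi s, C {x | x ∈ A ∧ ENNReal.ofReal t < upperPart s g x} :=
        setLIntegral_mono' measurableSet_Ioi fun t ht => hC fun x hx =>
          ⟨hx.1, lt_upperPart_iff.2
            ⟨(ENNReal.ofReal_le_ofReal (le_of_lt ht)).trans_lt hx.2, hx.2⟩⟩
    _ ≤ choquetOn C A (upperPart s g) := lintegral_mono_set (Ioi_subset_Ioi hs)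

end Choquet

/-! ### Marcinkiewicz interpolation for Choquet integrals -/

lemma setLIntegral_Ioo_rpow {a t : ℝ} (ha : -1 < a) (ht : 0 ≤ t) :
    ∫⁻ s in Ioo 0 t, ENNReal.ofReal (s ^ a) = ENNReal.ofReal ((a + 1)⁻¹ * t ^ (a + 1)) := by
  have hint : IntegrableOn (fun s : ℝ => s ^ a) (Ioc 0 t) :=
    (intervalIntegrable_iff_integrableOn_Ioc_of_le ht).1
      (intervalIntegral.intervalIntegrable_rpow' ha)
  have hnonneg : ∀ᵐ s ∂volume.restrict (Ioc 0 t), 0 ≤ s ^ a :=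
    (ae_restrict_mem measurableSet_Ioc).mono fun s hs => Real.rpow_nonneg hs.1.le a
  rw [setLIntegral_congr Ioo_ae_eq_Ioc, ← ofReal_integral_eq_lintegral_ofReal hint hnonneg,
    ← intervalIntegral.integral_of_le ht, integral_rpow (.inl ha),
    Real.zero_rpow (by linarith), sub_zero, div_eq_inv_mul]

lemma lintegral_rpow_mul_setLIntegral_Ioi {a : ℝ} (ha : -1 < a) {F : ℝ → ℝ≥0∞}
    (hF : Measurable F) :
    ∫⁻ s in Ioi (0 : ℝ), ENNReal.ofReal (s ^ a) * ∫⁻ t in Ioi s, F t =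
      ENNReal.ofReal (a + 1)⁻¹ * ∫⁻ t in Ioi (0 : ℝ), ENNReal.ofReal (t ^ (a + 1)) * F t := by
  let G (s t : ℝ) : ℝ≥0∞ := {q : ℝ × ℝ | q.1 < q.2}.indicator
    (fun q => ENNReal.ofReal (q.1 ^ a) * F q.2) (s, t)
  have hpow : Measurable fun s : ℝ => ENNReal.ofReal (s ^ a) :=
    (measurable_id.pow_const a).ennreal_ofReal
  have hG : Measurable (Function.uncurry G) :=
    ((hpow.comp measurable_fst).mul (hF.comp measurable_snd)).indicator
      (measurableSet_lt measurable_fst measurable_snd)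
  have hG_left (s : ℝ) : G s = (Ioi s).indicator fun t => ENNReal.ofReal (s ^ a) * F t := rfl
  have hG_right (t : ℝ) :
      (fun s => G s t) = (Iio t).indicator fun s => ENNReal.ofReal (s ^ a) * F t := rfl
  calc ∫⁻ s in Ioi (0 : ℝ), ENNReal.ofReal (s ^ a) * ∫⁻ t in Ioi s, F t
      = ∫⁻ s in Ioi (0 : ℝ), ∫⁻ t in Ioi (0 : ℝ), G s t := by
        refine setLIntegral_congr_fun measurableSet_Ioi fun s hs => ?_
        simp only [hG_left]
        rw [setLIntegral_indicator measurableSet_Ioi,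
          inter_eq_left.2 (Ioi_subset_Ioi (le_of_lt hs)),
          lintegral_const_mul' _ _ ENNReal.ofReal_ne_top]
    _ = ∫⁻ t in Ioi (0 : ℝ), ∫⁻ s in Ioi (0 : ℝ), G s t :=
        lintegral_lintegral_swap hG.aemeasurable
    _ = ∫⁻ t in Ioi (0 : ℝ),
          ENNReal.ofReal (a + 1)⁻¹ * (ENNReal.ofReal (t ^ (a + 1)) * F t) := by
        refine setLIntegral_congr_fun measurableSet_Ioi fun t ht => ?_
        simp only [hG_right]
        rw [setLIntegral_indicator measurableSet_Iio, Iio_inter_Ioi, lintegral_mul_const _ hpow,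
          setLIntegral_Ioo_rpow ha (le_of_lt ht), ENNReal.ofReal_mul (inv_nonneg.2 (by linarith)),
          mul_assoc]
    _ = _ := lintegral_const_mul' _ _ ENNReal.ofReal_ne_top

section Marcinkiewicz

variable {X : Type*} {C : Set X → ℝ≥0∞} {T : (X → ℝ≥0∞) → X → ℝ≥0∞} {K : ℝ≥0}

lemma mul_superlevel_two_mul_le_of_weakType (hC : Monotone C)
    (hweak : ∀ g : X → ℝ≥0∞, ∀ s : ℝ, 0 < s →
      ENNReal.ofReal s * C {x | ENNReal.ofReal s < T g x} ≤ K * choquet C g)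
    (htrunc : ∀ g : X → ℝ≥0∞, ∀ s : ℝ, 0 < s →
      ∀ x, T g x ≤ ENNReal.ofReal s + T (upperPart s g) x)
    (g : X → ℝ≥0∞) {s : ℝ} (hs : 0 < s) :
    ENNReal.ofReal s * C {x | ENNReal.ofReal (2 * s) < T g x} ≤
      K * (ENNReal.ofReal s * C {x | ENNReal.ofReal s < g x} +
        ∫⁻ t in Ioi s, C {x | ENNReal.ofReal t < g x}) := by
  have hsub : {x | ENNReal.ofReal (2 * s) < T g x} ⊆
      {x | ENNReal.ofReal s < T (upperPart s g) x} := fun x hx => by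
    have h := lt_of_lt_of_le (show ENNReal.ofReal (2 * s) < T g x from hx) (htrunc g s hs x)
    rw [two_mul, ENNReal.ofReal_add hs.le hs.le] at h
    exact (ENNReal.add_lt_add_iff_left ENNReal.ofReal_ne_top).1 h
  calc ENNReal.ofReal s * C {x | ENNReal.ofReal (2 * s) < T g x}
      ≤ ENNReal.ofReal s * C {x | ENNReal.ofReal s < T (upperPart s g) x} := by
        gcongr
        exact hC hsub
    _ ≤ K * choquet C (upperPart s g) := hweak _ s hs
    _ ≤ _ := by
        gcongr
        exact choquet_upperPart_le hC hs.le g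

lemma lintegral_rpow_mul_superlevel_two_mul_le_of_weakType (hC : Monotone C)
    (hweak : ∀ g : X → ℝ≥0∞, ∀ s : ℝ, 0 < s →
      ENNReal.ofReal s * C {x | ENNReal.ofReal s < T g x} ≤ K * choquet C g)
    (htrunc : ∀ g : X → ℝ≥0∞, ∀ s : ℝ, 0 < s →
      ∀ x, T g x ≤ ENNReal.ofReal s + T (upperPart s g) x)
    {p : ℝ} (hp : 1 < p) (g : X → ℝ≥0∞) :
    ∫⁻ s in Ioi (0 : ℝ), ENNReal.ofReal (s ^ (p - 1)) * C {x | ENNReal.ofReal (2 * s) < T g x} ≤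
      K * ENNReal.ofReal (1 + (p - 1)⁻¹) *
        ∫⁻ s in Ioi (0 : ℝ), ENNReal.ofReal (s ^ (p - 1)) * C {x | ENNReal.ofReal s < g x} := by
  have hexp : p - 2 + 1 = p - 1 := by ring
  let F (t : ℝ) : ℝ≥0∞ := C {x | ENNReal.ofReal t < g x}
  have hF : Measurable F := (antitone_superlevel hC g).measurable
  have hmeas : Measurable fun s : ℝ => ENNReal.ofReal (s ^ (p - 1)) * F s :=
    (measurable_id.pow_const _).ennreal_ofReal.mul hF
  have hHardy := lintegral_rpow_mul_setLIntegral_Ioi (a := p - 2) (by linarith) hF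
  rw [hexp] at hHardy
  calc ∫⁻ s in Ioi (0 : ℝ), ENNReal.ofReal (s ^ (p - 1)) * C {x | ENNReal.ofReal (2 * s) < T g x}
      ≤ ∫⁻ s in Ioi (0 : ℝ), K * (ENNReal.ofReal (s ^ (p - 1)) * F s +
          ENNReal.ofReal (s ^ (p - 2)) * ∫⁻ t in Ioi s, F t) := by
        refine setLIntegral_mono' measurableSet_Ioi fun s (hs : 0 < s) => ?_
        rw [← hexp, Real.rpow_add_one hs.ne', ENNReal.ofReal_mul (Real.rpow_nonneg hs.le _),
          mul_assoc, mul_assoc, ← mul_add]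
        exact (mul_le_mul_right (mul_superlevel_two_mul_le_of_weakType hC hweak htrunc g hs)
          _).trans_eq (mul_left_comm _ _ _)
    _ = K * ENNReal.ofReal (1 + (p - 1)⁻¹) *
          ∫⁻ s in Ioi (0 : ℝ), ENNReal.ofReal (s ^ (p - 1)) * F s := by
        rw [lintegral_const_mul' _ _ ENNReal.coe_ne_top, lintegral_add_left hmeas,
          hHardy, ENNReal.ofReal_add zero_le_one (inv_nonneg.2 (by linarith)), ENNReal.ofReal_one]
        ring

lemma choquet_rpow_le_of_weakType (hC : Monotone C)
    (hweak : ∀ g : X → ℝ≥0∞, ∀ s : ℝ, 0 < s →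
      ENNReal.ofReal s * C {x | ENNReal.ofReal s < T g x} ≤ K * choquet C g)
    (htrunc : ∀ g : X → ℝ≥0∞, ∀ s : ℝ, 0 < s →
      ∀ x, T g x ≤ ENNReal.ofReal s + T (upperPart s g) x)
    {p : ℝ} (hp : 1 < p) (g : X → ℝ≥0∞) :
    choquet C (fun x => T g x ^ p) ≤
      ENNReal.ofReal (2 ^ p * (1 + (p - 1)⁻¹) * K) * choquet C (fun x => g x ^ p) := by
  have hp0 : 0 < p := by linarith
  have hconst : 0 ≤ 1 + (p - 1)⁻¹ := add_nonneg zero_le_one (inv_nonneg.2 (by linarith))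
  have hlayer := choquet_rpow C g one_pos hp0
  simp only [Real.one_rpow, one_mul] at hlayer
  calc choquet C (fun x => T g x ^ p)
      ≤ ENNReal.ofReal (2 ^ p * p) * (K * ENNReal.ofReal (1 + (p - 1)⁻¹) *
          ∫⁻ s in Ioi (0 : ℝ), ENNReal.ofReal (s ^ (p - 1)) * C {x | ENNReal.ofReal s < g x}) := by
        rw [choquet_rpow C (T g) two_pos hp0]
        gcongr
        exact lintegral_rpow_mul_superlevel_two_mul_le_of_weakType hC hweak htrunc hp g
    _ = ENNReal.ofReal (2 ^ p * (1 + (p - 1)⁻¹) * K) * choquet C (fun x => g x ^ p) := by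
        rw [hlayer, ENNReal.ofReal_mul (by positivity),
          ENNReal.ofReal_mul (mul_nonneg (by positivity) hconst),
          ENNReal.ofReal_mul (by positivity), ENNReal.ofReal_coe_nnreal]
        ring

end Marcinkiewicz

/-! ### Contents generated by a gauge -/

/-- A doubling gauge, prescribing the weight `w r` of a ball of radius `r`: it abstracts
`r ↦ ω_β r^β`. Nothing but finiteness is imposed at negative radii, where balls are empty. -/
structure IsDoublingGauge (D : ℝ≥0) (w : ℝ → ℝ≥0∞) : Prop where
  zero : w 0 = 0
  pos : ∀ ⦃r⦄, 0 < r → 0 < w r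
  ne_top : ∀ r, w r ≠ ∞
  monotoneOn : MonotoneOn w (Ici 0)
  two_mul_le : ∀ ⦃r⦄, 0 < r → w (2 * r) ≤ D * w r
  tendsto_atTop : Filter.Tendsto w Filter.atTop (nhds ∞)

namespace IsDoublingGauge

variable {D : ℝ≥0} {w : ℝ → ℝ≥0∞}

lemma const_pos (hw : IsDoublingGauge D w) : 0 < D := by
  refine pos_of_ne_zero fun hD => (hw.pos (mul_pos two_pos one_pos)).not_ge ?_
  simpa [hD] using hw.two_mul_le one_pos

lemma two_pow_mul_le (hw : IsDoublingGauge D w) {r : ℝ} (hr : 0 < r) (k : ℕ) :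
    w (2 ^ k * r) ≤ (D : ℝ≥0∞) ^ k * w r := by
  induction k with
  | zero => simp
  | succ k ih =>
    calc w (2 ^ (k + 1) * r) = w (2 * (2 ^ k * r)) := by ring_nf
      _ ≤ D * w (2 ^ k * r) := hw.two_mul_le (by positivity)
      _ ≤ D * (D ^ k * w r) := by gcongr
      _ = D ^ (k + 1) * w r := by ring

lemma exists_radius_bound (hw : IsDoublingGauge D w) {K : ℝ≥0∞} (hK : K ≠ ∞) :
    ∃ R, ∀ r, w r ≤ K → r ≤ R := by
  obtain ⟨R, hR⟩ :=
    Filter.eventually_atTop.1 (hw.tendsto_atTop.eventually (lt_mem_nhds hK.lt_top))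
  exact ⟨R, fun r hr => le_of_not_ge fun h => (hR r h).not_ge hr⟩

end IsDoublingGauge

section GaugeContent

variable {X : Type*} [PseudoMetricSpace X] {w : ℝ → ℝ≥0∞}

/-- The content `inf {∑ w (r_i) : E ⊆ ⋃ B(x_i, r_i)}` generated by a gauge `w` in a pseudometric
space. For `w r = ω_β r^β` it is the Hausdorff content `H^β_∞`. -/
def gaugeContent (w : ℝ → ℝ≥0∞) (E : Set X) : ℝ≥0∞ :=
  ⨅ (c : ℕ → X × ℝ) (_ : E ⊆ ⋃ i, ball (c i).1 (c i).2), ∑' i, w (c i).2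

/-- The centered maximal function of the Choquet integral with respect to the content generated by
a gauge `w`. For `w r = ω_β r^β` it is `M_{H^β_∞}`. -/
def gaugeMaximal (w : ℝ → ℝ≥0∞) (g : X → ℝ≥0∞) (x : X) : ℝ≥0∞ :=
  ⨆ (r : ℝ) (_ : 0 < r), (w r)⁻¹ * choquetOn (gaugeContent w) (ball x r) g

lemma gaugeContent_le_tsum {E : Set X} {c : ℕ → X × ℝ}
    (hE : E ⊆ ⋃ i, ball (c i).1 (c i).2) : gaugeContent w E ≤ ∑' i, w (c i).2 :=
  iInf₂_le c hE

lemma gaugeContent_mono : Monotone (gaugeContent w : Set X → ℝ≥0∞) :=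
  fun _ _ h => le_iInf₂ fun _ hc => gaugeContent_le_tsum (h.trans hc)

lemma gaugeContent_ball_le (hw : w 0 = 0) (x : X) (r : ℝ) : gaugeContent w (ball x r) ≤ w r := by
  refine (gaugeContent_le_tsum (c := fun i : ℕ => (x, if i = 0 then r else 0))
    (subset_iUnion_of_subset 0 (by simp))).trans_eq ?_
  rw [tsum_eq_single 0 fun i hi => by simp [hi, hw], if_pos rfl]

lemma gaugeContent_empty [Nonempty X] (hw : w 0 = 0) : gaugeContent w (∅ : Set X) = 0 := by
  simpa [hw] using gaugeContent_ball_le hw (Classical.arbitrary X) 0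

lemma exists_ballCover_tsum_le {E : Set X} (hE : gaugeContent w E ≠ ∞) {δ : ℝ≥0∞} (hδ : δ ≠ 0) :
    ∃ c : ℕ → X × ℝ, E ⊆ ⋃ i, ball (c i).1 (c i).2 ∧ ∑' i, w (c i).2 ≤ gaugeContent w E + δ := by
  obtain ⟨c, hc⟩ := iInf_lt_iff.1 (ENNReal.lt_add_right hE hδ)
  obtain ⟨hcover, hlt⟩ := iInf_lt_iff.1 hc
  exact ⟨c, hcover, hlt.le⟩

lemma gaugeContent_iUnion_le (s : ℕ → Set X) :
    gaugeContent w (⋃ i, s i) ≤ ∑' i, gaugeContent w (s i) := by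
  refine ENNReal.le_of_forall_pos_le_add fun ε hε hfin => ?_
  obtain ⟨δ, hδ, hδε⟩ := ENNReal.exists_pos_sum_of_countable' (ENNReal.coe_pos.2 hε).ne' ℕ
  choose c hcover hsum using fun i =>
    exists_ballCover_tsum_le (ENNReal.ne_top_of_tsum_ne_top hfin.ne i) (hδ i).ne'
  have hcover_pair : ⋃ i, s i ⊆ ⋃ k : ℕ, ball (c k.unpair.1 k.unpair.2).1
      (c k.unpair.1 k.unpair.2).2 := by
    rw [iUnion_unpair fun i j => ball (c i j).1 (c i j).2]
    exact iUnion_mono hcover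
  calc gaugeContent w (⋃ i, s i)
      ≤ ∑' k : ℕ, w (c k.unpair.1 k.unpair.2).2 := gaugeContent_le_tsum hcover_pair
    _ = ∑' i, ∑' j, w (c i j).2 := by
        rw [← ENNReal.tsum_prod (f := fun i j => w (c i j).2), ← Nat.pairEquiv.symm.tsum_eq]
        rfl
    _ ≤ ∑' i, (gaugeContent w (s i) + δ i) := ENNReal.tsum_le_tsum hsum
    _ ≤ ∑' i, gaugeContent w (s i) + ε := by
        rw [ENNReal.tsum_add]
        gcongr

/-- The content generated by a gauge as an outer measure, which gives access to countable
subadditivity over arbitrary index types. -/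
def gaugeOuterMeasure (X : Type*) [PseudoMetricSpace X] [Nonempty X] (hw : w 0 = 0) :
    OuterMeasure X where
  measureOf := gaugeContent w
  empty := gaugeContent_empty hw
  mono h := gaugeContent_mono h
  iUnion_nat s _ := gaugeContent_iUnion_le s

lemma gaugeContent_biUnion_le [Nonempty X] (hw : w 0 = 0) {ι : Type*} {I : Set ι}
    (hI : I.Countable) (s : ι → Set X) :
    gaugeContent w (⋃ i ∈ I, s i) ≤ ∑' i : I, gaugeContent w (s i) :=
  measure_biUnion_le (gaugeOuterMeasure X hw) hI s

lemma gaugeMaximal_le_add_upperPart {D : ℝ≥0} (hw : IsDoublingGauge D w) {s : ℝ} (hs : 0 ≤ s)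
    (g : X → ℝ≥0∞) (x : X) :
    gaugeMaximal w g x ≤ ENNReal.ofReal s + gaugeMaximal w (upperPart s g) x := by
  refine iSup₂_le fun r hr => ?_
  calc (w r)⁻¹ * choquetOn (gaugeContent w) (ball x r) g
      ≤ (w r)⁻¹ * (ENNReal.ofReal s * w r +
          choquetOn (gaugeContent w) (ball x r) (upperPart s g)) := by
        grw [choquetOn_le_add_choquetOn_upperPart gaugeContent_mono hs,
          gaugeContent_ball_le hw.zero]
    _ = ENNReal.ofReal s + (w r)⁻¹ * choquetOn (gaugeContent w) (ball x r) (upperPart s g) := by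
        rw [mul_add, mul_left_comm, ENNReal.inv_mul_cancel (hw.pos hr).ne' (hw.ne_top r), mul_one]
    _ ≤ ENNReal.ofReal s + gaugeMaximal w (upperPart s g) x := by
        gcongr
        exact le_iSup₂ (f := fun (r : ℝ) (_ : 0 < r) =>
          (w r)⁻¹ * choquetOn (gaugeContent w) (ball x r) (upperPart s g)) r hr

lemma exists_mul_le_choquetOn_of_lt_gaugeMaximal {g : X → ℝ≥0∞} {t : ℝ≥0∞} {x : X}
    (ht : t < gaugeMaximal w g x) :
    ∃ r, 0 < r ∧ t * w r ≤ choquetOn (gaugeContent w) (ball x r) g := by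
  obtain ⟨r, hr⟩ := lt_iSup_iff.1 ht
  obtain ⟨hr0, hlt⟩ := lt_iSup_iff.1 hr
  rw [← ENNReal.div_eq_inv_mul] at hlt
  exact ⟨r, hr0, ENNReal.mul_le_of_le_div hlt.le⟩

end GaugeContent

/-! ### Packed families of balls -/

lemma tsum_subtype_le_of_forall_finset {α : Type*} {s : Set α} {f : α → ℝ≥0∞} {b : ℝ≥0∞}
    (h : ∀ F : Finset α, ↑F ⊆ s → ∑ x ∈ F, f x ≤ b) : ∑' x : s, f x ≤ b := by
  rw [ENNReal.tsum_eq_iSup_sum]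
  refine iSup_le fun F => ?_
  simpa using h (F.map (Function.Embedding.subtype _)) (by simp)

lemma countable_of_tsum_ne_top {α : Type*} {s : Set α} {f : α → ℝ≥0∞} (hpos : ∀ x ∈ s, 0 < f x)
    (hsum : ∑' x : s, f x ≠ ∞) : s.Countable := by
  have hsupp := Summable.countable_support_ennreal hsum
  rw [Function.support_eq_univ fun x : s => (hpos x x.2).ne'] at hsupp
  exact countable_coe_iff.1 (countable_univ_iff.1 hsupp)

section Packing

variable {X : Type*} [PseudoMetricSpace X] {D : ℝ≥0} {w : ℝ → ℝ≥0∞} {r : X → ℝ} {A : Set X}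

/-- The centers in `A` of those balls `B(x, r x)` that lie inside `B(c, R)`. The bound `r x ≤ R` is
required separately since a ball does not determine its radius. -/
def ballsInside (r : X → ℝ) (A : Set X) (c : X) (R : ℝ) : Set X :=
  {x ∈ A | ball x (r x) ⊆ ball c R ∧ r x ≤ R}

/-- The family of balls `B(x, r x)`, `x ∈ A`, is packed if the total weight of its members inside
any ball is at most twice the weight of that ball. -/
def IsPacked (w : ℝ → ℝ≥0∞) (r : X → ℝ) (A : Set X) : Prop :=
  ∀ c R, ∑' x : ballsInside r A c R, w (r x) ≤ 2 * w R

/-- The balls `B(c, R)`, encoded as pairs `(c, R)`, whose weight is at most the total weight of the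
members of the family `B(x, r x)`, `x ∈ A`, inside them. -/
def saturatedBalls (w : ℝ → ℝ≥0∞) (r : X → ℝ) (A : Set X) : Set (X × ℝ) :=
  {q | 0 < q.2 ∧ w q.2 ≤ ∑' x : ballsInside r A q.1 q.2, w (r x)}

lemma isPacked_empty : IsPacked w r (∅ : Set X) := fun c R => by simp [ballsInside]

lemma isPacked_sUnion {S : Set (Set X)} (hne : S.Nonempty) (hdir : DirectedOn (· ⊆ ·) S)
    (hS : ∀ A ∈ S, IsPacked w r A) : IsPacked w r (⋃₀ S) := by
  intro c R
  refine tsum_subtype_le_of_forall_finset (f := fun x => w (r x)) fun F hF => ?_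
  obtain ⟨A, hA, hFA⟩ := hdir.exists_mem_subset_of_finite_of_subset_sUnion hne F.finite_toSet
    fun x hx => (hF hx).1
  calc ∑ x ∈ F, w (r x) = ∑' x : (F : Set X), w (r x) :=
        (F.tsum_subtype' fun x => w (r x)).symm
    _ ≤ ∑' x : ballsInside r A c R, w (r x) :=
        ENNReal.tsum_mono_subtype (fun x => w (r x)) fun x hx => ⟨hFA hx, (hF hx).2⟩
    _ ≤ 2 * w R := hS A hA c R

lemma exists_mem_saturatedBalls_of_not_isPacked_insert (hw : MonotoneOn w (Ici 0)) {x : X}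
    (hx : 0 < r x) (hA : IsPacked w r A) (hins : ¬ IsPacked w r (insert x A)) :
    ∃ q ∈ saturatedBalls w r A, ball x (r x) ⊆ ball q.1 q.2 ∧ r x ≤ q.2 := by
  simp only [IsPacked, not_forall, not_le] at hins
  obtain ⟨c, R, hlt⟩ := hins
  have hxR : ball x (r x) ⊆ ball c R ∧ r x ≤ R := by
    by_contra hnot
    refine hlt.not_ge ((ENNReal.tsum_mono_subtype (fun y => w (r y)) ?_).trans (hA c R))
    rintro y ⟨rfl | hy, hyR⟩
    exacts [absurd hyR hnot, ⟨hy, hyR⟩]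
  have hsplit : ∑' y : ballsInside r (insert x A) c R, w (r y) ≤
      w (r x) + ∑' y : ballsInside r A c R, w (r y) := by
    calc ∑' y : ballsInside r (insert x A) c R, w (r y)
        ≤ ∑' y : ↥({x} ∪ ballsInside r A c R), w (r y) :=
          ENNReal.tsum_mono_subtype (fun y => w (r y)) fun y hy => hy.1.imp_right fun h => ⟨h, hy.2⟩
      _ ≤ ∑' y : ({x} : Set X), w (r y) + ∑' y : ballsInside r A c R, w (r y) :=
          ENNReal.tsum_union_le (fun y => w (r y)) _ _
      _ = _ := by rw [tsum_singleton x fun y => w (r y)]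
  refine ⟨(c, R), ⟨hx.trans_le hxR.2, ?_⟩, hxR⟩
  by_contra! hsmall
  refine hlt.not_ge (hsplit.trans ?_)
  rw [two_mul]
  exact add_le_add (hw hx.le (hx.le.trans hxR.2) hxR.2) hsmall.le

lemma exists_isPacked_forall_subset_saturatedBalls (hw : MonotoneOn w (Ici 0)) {u : Set X}
    (hr : ∀ x ∈ u, 0 < r x) :
    ∃ A ⊆ u, IsPacked w r A ∧
      ∀ x ∈ u, ∃ q ∈ saturatedBalls w r A, ball x (r x) ⊆ ball q.1 q.2 ∧ r x ≤ q.2 := by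
  obtain ⟨A, -, hmax⟩ := zorn_subset_nonempty {A | A ⊆ u ∧ IsPacked w r A}
    (fun S hS hchain hne => ⟨⋃₀ S, ⟨sUnion_subset fun A hA => (hS hA).1,
      isPacked_sUnion hne hchain.directedOn fun A hA => (hS hA).2⟩,
      fun _ => subset_sUnion_of_mem⟩)
    ∅ ⟨empty_subset u, isPacked_empty⟩
  obtain ⟨hAu, hA⟩ := hmax.prop
  refine ⟨A, hAu, hA, fun x hx => ?_⟩
  by_cases hxA : x ∈ A
  · exact ⟨(x, r x), ⟨hr x hx, ENNReal.le_tsum (f := fun y : ballsInside r A x (r x) => w (r y))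
      ⟨x, hxA, subset_rfl, le_rfl⟩⟩, subset_rfl, le_rfl⟩
  · refine exists_mem_saturatedBalls_of_not_isPacked_insert hw (hr x hx) hA fun hins => hxA ?_
    exact hmax.le_of_ge ⟨insert_subset hx hAu, hins⟩ (subset_insert x A) (mem_insert x A)

lemma mem_ballsInside_of_inter_ball_nonempty {x c : X} {R : ℝ} (hxA : x ∈ A)
    (hx : 0 < r x) (hxR : r x ≤ R) (hne : (ball x (r x) ∩ ball c R).Nonempty) :
    x ∈ ballsInside r A c (2 ^ 2 * R) := by
  obtain ⟨y, hyx, hyc⟩ := hne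
  refine ⟨hxA, ball_subset_ball' ?_, by linarith⟩
  linarith [dist_triangle_left x c y, mem_ball.1 hyx, mem_ball.1 hyc]

lemma subsingleton_setOf_lt_radius (hd : A.PairwiseDisjoint fun x => ball x (2 * r x)) (c : X)
    (R : ℝ) : {x ∈ A | R < r x ∧ (ball x (r x) ∩ ball c R).Nonempty}.Subsingleton := by
  have hmem {x : X} (hxR : R < r x) (hne : (ball x (r x) ∩ ball c R).Nonempty) :
      c ∈ ball x (2 * r x) := by
    obtain ⟨y, hyx, hyc⟩ := hne
    rw [mem_ball]
    linarith [dist_triangle_left c x y, mem_ball.1 hyx, mem_ball.1 hyc]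
  exact fun x ⟨hxA, hxR, hxne⟩ y ⟨hyA, hyR, hyne⟩ =>
    hd.elim_set hxA hyA c (hmem hxR hxne) (hmem hyR hyne)

/-- At most one ball of the family is larger than `B(c, R)` and meets it; the others that meet it
lie inside `B(c, 4R)`, where packing bounds their total weight. -/
lemma IsPacked.tsum_gaugeContent_inter_ball_le [Nonempty X] (hw : IsDoublingGauge D w)
    (hA : IsPacked w r A) (hd : A.PairwiseDisjoint fun x => ball x (2 * r x)) (c : X) (R : ℝ) :
    ∑' x : A, gaugeContent w (ball (x : X) (r x) ∩ ball c R) ≤ (2 * D ^ 2 + 1 : ℝ≥0) * w R := by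
  rcases le_or_gt R 0 with hR | hR
  · simp [ball_eq_empty.2 hR, gaugeContent_empty hw.zero]
  let small := ballsInside r A c (2 ^ 2 * R)
  let large := {x ∈ A | R < r x ∧ (ball x (r x) ∩ ball c R).Nonempty}
  have hpt (x : A) : gaugeContent w (ball (x : X) (r x) ∩ ball c R) ≤
      small.indicator (fun x => w (r x)) x + large.indicator (fun _ => w R) x := by
    rcases (ball (x : X) (r x) ∩ ball c R).eq_empty_or_nonempty with h | h
    · simp [h, gaugeContent_empty hw.zero]
    rcases le_or_gt (r x) R with hxR | hxR
    · have hx : (x : X) ∈ small :=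
        mem_ballsInside_of_inter_ball_nonempty x.2 (pos_of_mem_ball h.choose_spec.1) hxR h
      rw [indicator_of_mem hx]
      exact ((gaugeContent_mono inter_subset_left).trans
        (gaugeContent_ball_le hw.zero _ _)).trans le_self_add
    · have hx : (x : X) ∈ large := ⟨x.2, hxR, h⟩
      rw [indicator_of_mem hx]
      exact ((gaugeContent_mono inter_subset_right).trans
        (gaugeContent_ball_le hw.zero _ _)).trans le_add_self
  have hlarge : ∑' _ : large, w R ≤ w R := by
    rcases (subsingleton_setOf_lt_radius hd c R).eq_empty_or_singleton with h | ⟨x, h⟩ <;>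
      simp [large, h]
  calc ∑' x : A, gaugeContent w (ball (x : X) (r x) ∩ ball c R)
      ≤ ∑' x : A, (small.indicator (fun x => w (r x)) x + large.indicator (fun _ => w R) x) :=
        ENNReal.tsum_le_tsum hpt
    _ ≤ ∑' x, (small.indicator (fun x => w (r x)) x + large.indicator (fun _ => w R) x) :=
        ENNReal.tsum_comp_le_tsum_of_injective Subtype.val_injective _
    _ = ∑' x : small, w (r x) + ∑' _ : large, w R := by
        rw [ENNReal.tsum_add, tsum_subtype small fun x => w (r x), tsum_subtype large fun _ => w R]
    _ ≤ 2 * w (2 ^ 2 * R) + w R := add_le_add (hA _ _) hlarge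
    _ ≤ 2 * (D ^ 2 * w R) + w R := by grw [hw.two_pow_mul_le hR]
    _ = (2 * D ^ 2 + 1 : ℝ≥0) * w R := by push_cast; ring

lemma IsPacked.tsum_gaugeContent_inter_le [Nonempty X] (hw : IsDoublingGauge D w)
    (hA : IsPacked w r A) (hd : A.PairwiseDisjoint fun x => ball x (2 * r x)) (E : Set X) :
    ∑' x : A, gaugeContent w (ball (x : X) (r x) ∩ E) ≤
      (2 * D ^ 2 + 1 : ℝ≥0) * gaugeContent w E := by
  have hK : ((2 * D ^ 2 + 1 : ℝ≥0) : ℝ≥0∞) ≠ 0 := by simp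
  conv_rhs => rw [gaugeContent, ENNReal.mul_iInf_of_ne hK ENNReal.coe_ne_top]
  refine le_iInf fun c => ?_
  rw [ENNReal.mul_iInf_of_ne hK ENNReal.coe_ne_top]
  refine le_iInf fun hc => ?_
  calc ∑' x : A, gaugeContent w (ball (x : X) (r x) ∩ E)
      ≤ ∑' x : A, ∑' i, gaugeContent w (ball (x : X) (r x) ∩ ball (c i).1 (c i).2) := by
        refine ENNReal.tsum_le_tsum fun x =>
          (gaugeContent_mono ?_).trans (gaugeContent_iUnion_le _)
        rw [← inter_iUnion]
        exact inter_subset_inter_right _ hc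
    _ = ∑' i, ∑' x : A, gaugeContent w (ball (x : X) (r x) ∩ ball (c i).1 (c i).2) :=
        ENNReal.tsum_comm
    _ ≤ ∑' i, (2 * D ^ 2 + 1 : ℝ≥0) * w (c i).2 :=
        ENNReal.tsum_le_tsum fun i => hA.tsum_gaugeContent_inter_ball_le hw hd _ _
    _ = (2 * D ^ 2 + 1 : ℝ≥0) * ∑' i, w (c i).2 := ENNReal.tsum_mul_left

lemma pairwiseDisjoint_ballsInside (hr : ∀ x ∈ A, 0 < r x) {V : Set (X × ℝ)}
    (hV : V.PairwiseDisjoint fun q => ball q.1 q.2) :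
    V.PairwiseDisjoint fun q => ballsInside r A q.1 q.2 :=
  fun _ hq _ hq' hne => disjoint_left.2 fun x hx hx' =>
    disjoint_left.1 (hV hq hq' hne) (hx.2.1 (mem_ball_self (hr x hx.1)))
      (hx'.2.1 (mem_ball_self (hr x hx.1)))

lemma tsum_le_of_pairwiseDisjoint_saturatedBalls (hr : ∀ x ∈ A, 0 < r x) {V : Set (X × ℝ)}
    (hVsat : V ⊆ saturatedBalls w r A) (hV : V.PairwiseDisjoint fun q => ball q.1 q.2) :
    ∑' q : V, w q.1.2 ≤ ∑' x : A, w (r x) := by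
  calc ∑' q : V, w q.1.2
      ≤ ∑' q : V, ∑' x : ballsInside r A q.1.1 q.1.2, w (r x) :=
        ENNReal.tsum_le_tsum fun q => (hVsat q.2).2
    _ = ∑' x : ⋃ q ∈ V, ballsInside r A q.1 q.2, w (r x) :=
        (ENNReal.tsum_biUnion' (f := fun x => w (r x)) (pairwiseDisjoint_ballsInside hr hV)).symm
    _ ≤ ∑' x : A, w (r x) :=
        ENNReal.tsum_mono_subtype (fun x => w (r x)) (iUnion₂_subset fun q _ x hx => hx.1)

lemma gaugeContent_biUnion_saturatedBalls_le [Nonempty X] (hw : IsDoublingGauge D w)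
    (hr : ∀ x ∈ A, 0 < r x) :
    gaugeContent w (⋃ q ∈ saturatedBalls w r A, ball q.1 (9 * q.2)) ≤
      D ^ 6 * ∑' x : A, w (r x) := by
  by_cases hsum : ∑' x : A, w (r x) = ∞
  · rw [hsum, ENNReal.mul_top (by simpa using hw.const_pos.ne')]
    exact le_top
  obtain ⟨R, hR⟩ := hw.exists_radius_bound hsum
  have hbound : ∀ q ∈ saturatedBalls w r A, 9 * q.2 ≤ 9 * R := fun q hq =>
    mul_le_mul_of_nonneg_left (hR _ (hq.2.trans
      (ENNReal.tsum_mono_subtype (fun x => w (r x)) fun _ hx => hx.1))) (by norm_num)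
  obtain ⟨V, hVsat, hVdisj, hVcover⟩ := Vitali.exists_disjoint_subfamily_covering_enlargement_ball
    (saturatedBalls w r A) Prod.fst (fun q => 9 * q.2) (9 * R) hbound 4 (by norm_num)
  have hVsum : ∑' q : V, w q.1.2 ≤ ∑' x : A, w (r x) :=
    tsum_le_of_pairwiseDisjoint_saturatedBalls hr hVsat (hVdisj.mono_on fun q hq =>
      ball_subset_ball (by linarith [(hVsat hq).1]))
  have hVcount : V.Countable := countable_of_tsum_ne_top (f := fun q => w q.2)
    (fun q hq => hw.pos (hVsat hq).1) (ne_top_of_le_ne_top hsum hVsum)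
  have hcover : ⋃ q ∈ saturatedBalls w r A, ball q.1 (9 * q.2) ⊆
      ⋃ q ∈ V, ball q.1 (2 ^ 6 * q.2) := iUnion₂_subset fun q hq => by
    obtain ⟨q', hq', hsub⟩ := hVcover q hq
    refine hsub.trans (subset_iUnion₂_of_subset q' hq' (ball_subset_ball ?_))
    linarith [(hVsat hq').1]
  calc gaugeContent w (⋃ q ∈ saturatedBalls w r A, ball q.1 (9 * q.2))
      ≤ ∑' q : V, gaugeContent w (ball q.1.1 (2 ^ 6 * q.1.2)) :=
        (gaugeContent_mono hcover).trans (gaugeContent_biUnion_le hw.zero hVcount _)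
    _ ≤ ∑' q : V, D ^ 6 * w q.1.2 := ENNReal.tsum_le_tsum fun q =>
        (gaugeContent_ball_le hw.zero _ _).trans (hw.two_pow_mul_le (hVsat q.2).1 6)
    _ = D ^ 6 * ∑' q : V, w q.1.2 := ENNReal.tsum_mul_left
    _ ≤ D ^ 6 * ∑' x : A, w (r x) := by gcongr

lemma exists_isPacked_gaugeContent_le [Nonempty X] (hw : IsDoublingGauge D w) {S : Set X}
    (hr : ∀ x ∈ S, 0 < r x) {R : ℝ} (hR : ∀ x ∈ S, r x ≤ R) :
    ∃ A ⊆ S, A.PairwiseDisjoint (fun x => ball x (2 * r x)) ∧ IsPacked w r A ∧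
      gaugeContent w S ≤ D ^ 6 * ∑' x : A, w (r x) := by
  obtain ⟨u, huS, hudisj, hucover⟩ := Vitali.exists_disjoint_subfamily_covering_enlargement_ball
    S id (fun x => 2 * r x) (2 * R) (fun x hx => by linarith [hR x hx]) 4 (by norm_num)
  obtain ⟨A, hAu, hA, hsat⟩ :=
    exists_isPacked_forall_subset_saturatedBalls hw.monotoneOn fun x hx => hr x (huS hx)
  refine ⟨A, hAu.trans huS, hudisj.subset hAu, hA, (gaugeContent_mono fun z hz => ?_).trans
    (gaugeContent_biUnion_saturatedBalls_le hw fun x hx => hr x (huS (hAu hx)))⟩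
  obtain ⟨x, hx, hzx⟩ := hucover z hz
  obtain ⟨q, hq, hxq, hrq⟩ := hsat x hx
  have hdist_zx : dist z x < 4 * (2 * r x) := hzx (mem_ball_self (mul_pos two_pos (hr z hz)))
  have hdist_xq : dist x q.1 < q.2 := hxq (mem_ball_self (hr x (huS hx)))
  refine mem_iUnion₂.2 ⟨q, hq, mem_ball.2 ?_⟩
  linarith [dist_triangle z x q.1]

end Packing

/-! ### The maximal function -/

lemma mul_gaugeContent_lt_gaugeMaximal_le {X : Type*} [PseudoMetricSpace X] [Nonempty X] {D : ℝ≥0}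
    {w : ℝ → ℝ≥0∞} (hw : IsDoublingGauge D w) (g : X → ℝ≥0∞) {t : ℝ≥0∞} (ht0 : t ≠ 0)
    (ht : t ≠ ∞) :
    t * gaugeContent w {x | t < gaugeMaximal w g x} ≤
      (D ^ 6 * (2 * D ^ 2 + 1) : ℝ≥0) * choquet (gaugeContent w) g := by
  by_cases hg : choquet (gaugeContent w) g = ∞
  · rw [hg, ENNReal.mul_top (by simpa using hw.const_pos.ne')]
    exact le_top
  choose! r hr0 hr using fun x (hx : t < gaugeMaximal w g x) =>
    exists_mul_le_choquetOn_of_lt_gaugeMaximal hx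
  obtain ⟨R, hR⟩ := hw.exists_radius_bound (ENNReal.div_ne_top hg ht0)
  have hbound (x : X) (hx : t < gaugeMaximal w g x) : r x ≤ R := hR _ <| by
    rw [ENNReal.le_div_iff_mul_le (.inl ht0) (.inl ht), mul_comm]
    exact (hr x hx).trans (choquetOn_le_choquet gaugeContent_mono _ _)
  obtain ⟨A, hAS, hdisj, hA, hcontent⟩ := exists_isPacked_gaugeContent_le hw hr0 hbound
  calc t * gaugeContent w {x | t < gaugeMaximal w g x}
      ≤ t * (D ^ 6 * ∑' x : A, w (r x)) := by grw [← hcontent]; rfl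
    _ = D ^ 6 * ∑' x : A, t * w (r x) := by rw [mul_left_comm, ENNReal.tsum_mul_left]
    _ ≤ D ^ 6 * ∑' x : A, choquetOn (gaugeContent w) (ball (x : X) (r x)) g := by
        gcongr with x
        exact hr x (hAS x.2)
    _ ≤ D ^ 6 * ((2 * D ^ 2 + 1 : ℝ≥0) * choquet (gaugeContent w) g) := by
        grw [tsum_choquetOn_le gaugeContent_mono (hA.tsum_gaugeContent_inter_le hw hdisj)]
    _ = (D ^ 6 * (2 * D ^ 2 + 1) : ℝ≥0) * choquet (gaugeContent w) g := by push_cast; ring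

theorem statement7_general {X : Type*} [PseudoMetricSpace X] [Nonempty X] {D : ℝ≥0}
    {w : ℝ → ℝ≥0∞} (hw : IsDoublingGauge D w) {p : ℝ} (hp : 1 < p) :
    ∃ C : ℝ, 0 < C ∧ ∀ g : X → ℝ≥0∞,
      choquet (gaugeContent w) (fun x => gaugeMaximal w g x ^ p) ≤
        ENNReal.ofReal C * choquet (gaugeContent w) (fun x => g x ^ p) := by
  have hD : 0 < D := hw.const_pos
  have hconst : 0 < 1 + (p - 1)⁻¹ := add_pos one_pos (inv_pos.2 (by linarith))
  refine ⟨2 ^ p * (1 + (p - 1)⁻¹) * (D ^ 6 * (2 * D ^ 2 + 1) : ℝ≥0),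
    mul_pos (mul_pos (by positivity) hconst) (by positivity), fun g => ?_⟩
  exact choquet_rpow_le_of_weakType gaugeContent_mono
    (fun g s hs => mul_gaugeContent_lt_gaugeMaximal_le hw g (ENNReal.ofReal_pos.2 hs).ne'
      ENNReal.ofReal_ne_top)
    (fun g s hs => gaugeMaximal_le_add_upperPart hw hs.le g) hp g

/-- The weight `ω_β r^β` of a ball of radius `r` in the definition of `H^β_∞`. -/
def ballWeight (β r : ℝ) : ℝ≥0∞ :=
  omegaC β * ENNReal.ofReal (r ^ β)

lemma omegaC_pos {β : ℝ} (hβ : 0 < β) : 0 < omegaC β :=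
  ENNReal.ofReal_pos.2 (div_pos (by positivity) (Real.Gamma_pos_of_pos (by positivity)))

lemma isDoublingGauge_ballWeight {β : ℝ} (hβ : 0 < β) :
    IsDoublingGauge (2 ^ β) (ballWeight β) where
  zero := by simp [ballWeight, Real.zero_rpow hβ.ne']
  pos r hr := ENNReal.mul_pos (omegaC_pos hβ).ne'
    (ENNReal.ofReal_pos.2 (Real.rpow_pos_of_pos hr β)).ne'
  ne_top r := ENNReal.mul_ne_top ENNReal.ofReal_ne_top ENNReal.ofReal_ne_top
  monotoneOn r hr s _ hrs := by
    have hr0 : 0 ≤ r := hr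
    unfold ballWeight
    gcongr
  two_mul_le r hr := by
    have h2 : ENNReal.ofReal (2 ^ β) = ((2 ^ β : ℝ≥0) : ℝ≥0∞) := by
      rw [← ENNReal.ofReal_coe_nnreal, NNReal.coe_rpow, NNReal.coe_two]
    rw [ballWeight, ballWeight, Real.mul_rpow two_pos.le hr.le, ENNReal.ofReal_mul (by positivity),
      h2, mul_left_comm]
  tendsto_atTop := by
    have h := ENNReal.Tendsto.const_mul (a := omegaC β)
      (ENNReal.tendsto_ofReal_atTop.comp (tendsto_rpow_atTop hβ)) (.inl ENNReal.top_ne_zero)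
    rwa [ENNReal.mul_top (omegaC_pos hβ).ne'] at h

/-- Strong-type `(p,p)` bound for the centered Hausdorff content
maximal function on `L^p(H^β_∞)`, `β ∈ (0,n)`, `1 < p < ∞`. -/
theorem statement7 (n : ℕ) (β p : ℝ) (hβ0 : 0 < β) (hβn : β < n) (hp : 1 < p) :
    ∃ C : ℝ, 0 < C ∧ ∀ f : Rn n → ℝ, MemChoquetLp (hContent n β) p f →
      choquet (hContent n β)
          (fun x => (maximalH n β (fun y => ENNReal.ofReal |f y|) x) ^ p) ≤
        ENNReal.ofReal C * choquet (hContent n β) (fun x => ENNReal.ofReal |f x| ^ p) := by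
  obtain ⟨C, hC, hbound⟩ :=
    statement7_general (X := Rn n) (isDoublingGauge_ballWeight hβ0) hp
  exact ⟨C, hC, fun f _ => hbound _⟩

end
end

section
/- Let 0 < γ < β ≤ n and p > γ/β, and f ∈ L^p(H^γ_∞). Then there exists C = C(γ,β,n,p) > 0 such that ∫ (M_{H^β_∞} f)^p dH^γ_∞ ≤ C ∫ |f|^p dH^γ_∞. -/
open scoped ENNReal
open Metric Set MeasureTheory

noncomputable section

open scoped NNReal

/-!
The maximal function of `g` is at most `∑ₖ 2 ^ k * dₖ`, where `dₖ ≤ 1` is the maximal density of the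
dyadic superlevel set `{g > 2 ^ k}`. Fix `σ < 1 / 2`. Where this sum exceeds `2 ^ m`, some density
of index `m - 1 + l` with `0 ≤ l` exceeds `(1 - 2 * σ) * σ ^ l`.

The set where the maximal density of `A` exceeds `s` has `γ`-content at most a constant times
`s ^ (-(γ / β))` times that of `A`. To see this, cover `A` by balls of radii `rᵢ` and put mass
`rᵢ ^ γ` at their centres: away from the doubled balls, a point of large density is the centre of a
ball with large mass compared with its radius, so that the Vitali covering lemma applies.

Hence the `l`-th dyadic layer costs a factor `σ ^ (-(γ / β) * l)`, while in the integral of `g ^ p`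
it gains `2 ^ (p * l)`. Some `σ < 1 / 2` satisfies `σ ^ (-(γ / β)) < 2 ^ p` precisely when
`γ / β < p`, and then the layers sum to a finite constant.
-/

section HausdorffContent

variable {X : Type*} [PseudoMetricSpace X] {γ β : ℝ} {A E : Set X}

/-- The `β`-dimensional Hausdorff content of a pseudometric space, by countable coverings by open
balls. It carries no normalization constant, which would cancel in the maximal inequality. -/
def hausdorffContent (β : ℝ) : OuterMeasure X :=
  OuterMeasure.boundedBy fun E => ⨅ (x : X) (r : ℝ≥0) (_ : E ⊆ ball x r), (r : ℝ≥0∞) ^ β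

lemma hausdorffContent_ball_le (β : ℝ) (x : X) (r : ℝ≥0) :
    hausdorffContent β (ball x r) ≤ (r : ℝ≥0∞) ^ β :=
  (OuterMeasure.boundedBy_le _).trans <| iInf_le_of_le x <| iInf₂_le r Subset.rfl

lemma hausdorffContent_le_tsum {ι : Type*} [Countable ι] (β : ℝ) {c : ι → X} {r : ι → ℝ≥0}
    (hE : E ⊆ ⋃ i, ball (c i) (r i)) : hausdorffContent β E ≤ ∑' i, (r i : ℝ≥0∞) ^ β :=
  (measure_mono hE).trans <| (measure_iUnion_le _).trans <|
    ENNReal.tsum_le_tsum fun i => hausdorffContent_ball_le β (c i) (r i)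

lemma exists_subset_ball_rpow_le [Nonempty X] (hβ : 0 < β) (S : Set X) {δ : ℝ≥0∞} (hδ : δ ≠ 0)
    (hS : (⨆ _ : S.Nonempty, ⨅ (x : X) (r : ℝ≥0) (_ : S ⊆ ball x r), (r : ℝ≥0∞) ^ β) ≠ ∞) :
    ∃ (x : X) (r : ℝ≥0), S ⊆ ball x r ∧ (r : ℝ≥0∞) ^ β ≤
      (⨆ _ : S.Nonempty, ⨅ (x : X) (r : ℝ≥0) (_ : S ⊆ ball x r), (r : ℝ≥0∞) ^ β) + δ := by
  rcases S.eq_empty_or_nonempty with rfl | hne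
  · exact ⟨Classical.arbitrary X, 0, empty_subset _, by simp [hβ]⟩
  · simp only [hne, ciSup_unique] at hS ⊢
    obtain ⟨x, hx⟩ := iInf_lt_iff.1 (ENNReal.lt_add_right hS hδ)
    obtain ⟨r, hr⟩ := iInf_lt_iff.1 hx
    obtain ⟨hsub, hlt⟩ := iInf_lt_iff.1 hr
    exact ⟨x, r, hsub, hlt.le⟩

lemma hausdorffContent_eq_iInf [Nonempty X] (hβ : 0 < β) (E : Set X) :
    hausdorffContent β E = ⨅ (c : ℕ → X) (r : ℕ → ℝ≥0) (_ : E ⊆ ⋃ i, ball (c i) (r i)),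
      ∑' i, (r i : ℝ≥0∞) ^ β := by
  refine le_antisymm (le_iInf₂ fun c r => le_iInf (hausdorffContent_le_tsum β)) ?_
  rw [hausdorffContent, OuterMeasure.boundedBy_apply]
  refine le_iInf₂ fun S hS => ENNReal.le_of_forall_pos_le_add fun ε hε hfin => ?_
  obtain ⟨δ, hδ, hδε⟩ := ENNReal.exists_pos_sum_of_countable' (ENNReal.coe_pos.2 hε).ne' ℕ
  choose c r hcover hle using fun i => exists_subset_ball_rpow_le hβ (S i) (hδ i).ne'
    (ENNReal.ne_top_of_tsum_ne_top hfin.ne i)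
  calc _ ≤ ∑' i, (r i : ℝ≥0∞) ^ β :=
        iInf_le_of_le c <| iInf₂_le r (hS.trans (iUnion_mono hcover))
    _ ≤ _ := ENNReal.tsum_le_tsum hle
    _ = _ := ENNReal.tsum_add
    _ ≤ _ := by gcongr

lemma tsum_rpow_le_rpow_tsum {ι : Type*} (a : ι → ℝ≥0∞) {e : ℝ} (he : 1 ≤ e) :
    ∑' i, a i ^ e ≤ (∑' i, a i) ^ e := by
  have rpow_eq (t : ℝ≥0∞) : t ^ e = t * t ^ (e - 1) := by
    conv_rhs => enter [1]; rw [← ENNReal.rpow_one t]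
    rw [← ENNReal.rpow_add_of_nonneg _ _ zero_le_one (sub_nonneg.2 he), add_sub_cancel]
  calc ∑' i, a i ^ e = ∑' i, a i * a i ^ (e - 1) := tsum_congr fun i => rpow_eq (a i)
    _ ≤ ∑' i, a i * (∑' j, a j) ^ (e - 1) := by
        gcongr with i
        exact ENNReal.le_tsum i
    _ = (∑' i, a i) ^ e := by rw [ENNReal.tsum_mul_right, ← rpow_eq]

lemma hausdorffContent_rpow_le_tsum {ι : Type*} [Countable ι] (hγ : 0 < γ) (hγβ : γ ≤ β)
    {c : ι → X} {r : ι → ℝ≥0} (hE : E ⊆ ⋃ i, ball (c i) (r i)) :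
    hausdorffContent β E ^ (γ / β) ≤ ∑' i, (r i : ℝ≥0∞) ^ γ := by
  have hβ : 0 < β := hγ.trans_le hγβ
  rw [← inv_div β γ, ENNReal.rpow_inv_le_iff (div_pos hβ hγ)]
  calc hausdorffContent β E ≤ ∑' i, (r i : ℝ≥0∞) ^ β := hausdorffContent_le_tsum β hE
    _ = ∑' i, ((r i : ℝ≥0∞) ^ γ) ^ (β / γ) := by
        simp only [← ENNReal.rpow_mul, mul_div_cancel₀ _ hγ.ne']
    _ ≤ _ := tsum_rpow_le_rpow_tsum _ ((one_le_div hγ).2 hγβ)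

lemma countable_of_pairwise_disjoint_of_measure_pos {Ω ι : Type*} [MeasurableSpace Ω]
    {μ : Measure Ω} [SFinite μ] {S : ι → Set Ω} (hS : ∀ i, MeasurableSet (S i))
    (hdisj : Pairwise (Function.onFun Disjoint S)) (hpos : ∀ i, 0 < μ (S i)) : Countable ι := by
  simpa [hpos, countable_univ_iff] using
    Measure.countable_meas_pos_of_disjoint_iUnion (μ := μ) hS hdisj

lemma hausdorffContent_le_of_rpow_le_measure_closedBall [MeasurableSpace X]
    [OpensMeasurableSpace X] {μ : Measure X} [IsFiniteMeasure μ] (hγ : 0 < γ) {K : ℝ≥0∞}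
    (hK : K ≠ ∞)
    (hE : ∀ x ∈ E, ∃ R : ℝ≥0, 0 < R ∧ (R : ℝ≥0∞) ^ γ ≤ K * μ (closedBall x R)) :
    hausdorffContent γ E ≤ 6 ^ γ * K * μ univ := by
  choose! R hR hRμ using hE
  have hbdd : ∀ x ∈ E, (R x : ℝ) ≤ ((K * μ univ) ^ γ⁻¹).toReal := fun x hx => by
    have hfin : (K * μ univ) ^ γ⁻¹ ≠ ∞ :=
      ENNReal.rpow_ne_top_of_nonneg (by positivity) (ENNReal.mul_ne_top hK (measure_ne_top μ _))
    rw [← ENNReal.ofReal_le_iff_le_toReal hfin, ENNReal.ofReal_coe_nnreal,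
      ENNReal.le_rpow_inv_iff hγ]
    exact (hRμ x hx).trans (by gcongr; exact subset_univ _)
  obtain ⟨u, huE, hdisj, hu⟩ := Vitali.exists_disjoint_subfamily_covering_enlargement_closedBall
    E id (fun x => R x) _ hbdd 5 (by norm_num)
  have hdisj' : Pairwise (Function.onFun Disjoint fun x : u => closedBall (x : X) (R x)) :=
    fun x y hxy => hdisj x.2 y.2 (Subtype.coe_injective.ne hxy)
  have : Countable u := countable_of_pairwise_disjoint_of_measure_pos
    (fun x => measurableSet_closedBall) hdisj' fun x => by
      have hRpos : (0 : ℝ≥0∞) < (R x : ℝ≥0∞) ^ γ :=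
        ENNReal.rpow_pos (ENNReal.coe_pos.2 (hR x (huE x.2))) ENNReal.coe_ne_top
      exact pos_of_mul_pos_right (hRpos.trans_le (hRμ x (huE x.2))) zero_le
  have hcover : E ⊆ ⋃ x : u, ball (x : X) (6 * R x : ℝ≥0) := fun y hy => by
    obtain ⟨x, hx, hyx⟩ := hu y hy
    have hRx : (0 : ℝ) < R x := hR x (huE hx)
    refine mem_iUnion.2 ⟨⟨x, hx⟩, closedBall_subset_ball ?_
      (hyx (mem_closedBall_self (R y).coe_nonneg))⟩
    push_cast
    linarith
  calc hausdorffContent γ E ≤ ∑' x : u, ((6 * R x : ℝ≥0) : ℝ≥0∞) ^ γ :=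
        hausdorffContent_le_tsum γ hcover
    _ = 6 ^ γ * ∑' x : u, (R x : ℝ≥0∞) ^ γ := by
        simp [ENNReal.mul_rpow_of_nonneg _ _ hγ.le, ENNReal.tsum_mul_left]
    _ ≤ 6 ^ γ * ∑' x : u, K * μ (closedBall (x : X) (R x)) := by
        gcongr with x; exact hRμ x (huE x.2)
    _ = 6 ^ γ * K * μ (⋃ x : u, closedBall (x : X) (R x)) := by
        rw [ENNReal.tsum_mul_left, measure_iUnion hdisj' fun _ => measurableSet_closedBall,
          mul_assoc]
    _ ≤ 6 ^ γ * K * μ univ := by gcongr; exact subset_univ _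

end HausdorffContent

section AtomicMeasure

variable {X ι : Type*} [MeasurableSpace X]

/-- The measure with an atom of mass `w i` at each point `c i`. -/
def atomicMeasure (w : ι → ℝ≥0∞) (c : ι → X) : Measure X :=
  Measure.sum fun i => w i • Measure.dirac (c i)

lemma atomicMeasure_univ (w : ι → ℝ≥0∞) (c : ι → X) : atomicMeasure w c univ = ∑' i, w i := by
  simp [atomicMeasure]

lemma tsum_subtype_le_atomicMeasure (w : ι → ℝ≥0∞) {c : ι → X} {J : Set ι} {S : Set X}
    (hJ : MapsTo c J S) : ∑' i : J, w i ≤ atomicMeasure w c S := by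
  rw [tsum_subtype J w]
  refine (ENNReal.tsum_le_tsum fun i => ?_).trans (Measure.le_sum_apply _ _)
  by_cases hi : i ∈ J
  · simp [hi, Measure.dirac_apply_of_mem (hJ hi)]
  · simp [hi]

end AtomicMeasure

section MaximalDensity

variable {X : Type*} [PseudoMetricSpace X] {γ β : ℝ} {A : Set X}

/-- The largest `β`-dimensional density of `A` in a ball centred at `x`, that is, the maximal
function of the indicator of `A`. -/
def maximalDensity (β : ℝ) (A : Set X) (x : X) : ℝ≥0∞ :=
  ⨆ (r : ℝ≥0) (_ : 0 < r), hausdorffContent β (ball x r ∩ A) / (r : ℝ≥0∞) ^ β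

lemma maximalDensity_le_one (β : ℝ) (A : Set X) (x : X) : maximalDensity β A x ≤ 1 :=
  iSup₂_le fun r _ => ENNReal.div_le_of_le_mul <| by
    simpa using (measure_mono inter_subset_left).trans (hausdorffContent_ball_le β x r)

lemma mem_closedBall_of_ball_inter_ball_nonempty {x c : X} {r R : ℝ}
    (h : (ball c r ∩ ball x R).Nonempty) (hfar : 2 * r ≤ dist x c) : c ∈ closedBall x (2 * R) := by
  obtain ⟨y, hyc, hyx⟩ := h
  rw [mem_ball] at hyc hyx
  rw [mem_closedBall, dist_comm]
  linarith [dist_triangle_left x c y]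

/-- Away from the doubled balls of a covering of `A`, only balls centred in `closedBall x (2 * R)`
meet `ball x R`, so a density above `s` forces enough mass of the covering near `x`. -/
lemma exists_rpow_le_atomicMeasure_closedBall {ι : Type*} [Countable ι] [MeasurableSpace X]
    (hγ : 0 < γ) (hγβ : γ ≤ β) {s : ℝ≥0∞} (hs : s ≠ 0) {c : ι → X} {r : ι → ℝ≥0}
    (hA : A ⊆ ⋃ i, ball (c i) (r i)) {x : X} (hfar : ∀ i, 2 * (r i : ℝ) ≤ dist x (c i))
    (hx : s < maximalDensity β A x) :
    ∃ R : ℝ≥0, 0 < R ∧ (R : ℝ≥0∞) ^ γ ≤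
      2 ^ γ * s ^ (-(γ / β)) * atomicMeasure (fun i => (r i : ℝ≥0∞) ^ γ) c (closedBall x R) := by
  have hβ : 0 < β := hγ.trans_le hγβ
  simp only [maximalDensity, lt_iSup_iff] at hx
  obtain ⟨R, hR, hsR⟩ := hx
  let J : Set ι := {i | (ball (c i) (r i) ∩ ball x R).Nonempty}
  have hJ : MapsTo c J (closedBall x (2 * R : ℝ≥0)) := fun i hi => by
    simpa using mem_closedBall_of_ball_inter_ball_nonempty hi (hfar i)
  have hcover : ball x R ∩ A ⊆ ⋃ i : J, ball (c i) (r i) := by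
    rintro y ⟨hyx, hyA⟩
    obtain ⟨i, hi⟩ := mem_iUnion.1 (hA hyA)
    exact mem_iUnion.2 ⟨⟨i, y, hi, hyx⟩, hi⟩
  have hmass : s ^ (γ / β) * (R : ℝ≥0∞) ^ γ ≤ ∑' i : J, (r i : ℝ≥0∞) ^ γ :=
    calc s ^ (γ / β) * (R : ℝ≥0∞) ^ γ = (s * (R : ℝ≥0∞) ^ β) ^ (γ / β) := by
          rw [ENNReal.mul_rpow_of_nonneg _ _ (by positivity), ← ENNReal.rpow_mul,
            mul_div_cancel₀ _ hβ.ne']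
      _ ≤ hausdorffContent β (ball x R ∩ A) ^ (γ / β) := by
          gcongr; exact (ENNReal.mul_lt_of_lt_div hsR).le
      _ ≤ _ := hausdorffContent_rpow_le_tsum hγ hγβ hcover
  refine ⟨2 * R, by positivity, ?_⟩
  calc ((2 * R : ℝ≥0) : ℝ≥0∞) ^ γ
      = 2 ^ γ * s ^ (-(γ / β)) * (s ^ (γ / β) * (R : ℝ≥0∞) ^ γ) := by
        rw [mul_assoc, ← mul_assoc (s ^ _), ← ENNReal.rpow_add _ _ hs hsR.ne_top, neg_add_cancel,
          ENNReal.rpow_zero, one_mul, ENNReal.coe_mul, ENNReal.mul_rpow_of_nonneg _ _ hγ.le,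
          ENNReal.coe_ofNat]
    _ ≤ _ := by gcongr; exact hmass.trans (tsum_subtype_le_atomicMeasure _ hJ)

lemma hausdorffContent_lt_maximalDensity_le_of_cover {ι : Type*} [Countable ι] (hγ : 0 < γ)
    (hγβ : γ ≤ β) {s : ℝ≥0∞} (hs : s ≠ 0) (hs1 : s ≤ 1) {c : ι → X} {r : ι → ℝ≥0}
    (hA : A ⊆ ⋃ i, ball (c i) (r i)) (hfin : ∑' i, (r i : ℝ≥0∞) ^ γ ≠ ∞) :
    hausdorffContent γ {x | s < maximalDensity β A x} ≤
      2 * 12 ^ γ * s ^ (-(γ / β)) * ∑' i, (r i : ℝ≥0∞) ^ γ := by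
  borelize X
  set near := ⋃ i, ball (c i) (2 * r i : ℝ≥0)
  set far := {x | s < maximalDensity β A x} \ near
  have : IsFiniteMeasure (atomicMeasure (fun i => (r i : ℝ≥0∞) ^ γ) c) :=
    ⟨by rwa [atomicMeasure_univ, lt_top_iff_ne_top]⟩
  have hnear : hausdorffContent γ near ≤ 2 ^ γ * ∑' i, (r i : ℝ≥0∞) ^ γ := by
    refine (hausdorffContent_le_tsum γ Subset.rfl).trans_eq ?_
    simp [ENNReal.mul_rpow_of_nonneg _ _ hγ.le, ENNReal.tsum_mul_left]
  have hfar : hausdorffContent γ far ≤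
      6 ^ γ * (2 ^ γ * s ^ (-(γ / β))) * ∑' i, (r i : ℝ≥0∞) ^ γ := by
    rw [← atomicMeasure_univ _ c]
    have hs_top : s ≠ ∞ := ne_top_of_le_ne_top ENNReal.one_ne_top hs1
    refine hausdorffContent_le_of_rpow_le_measure_closedBall hγ (by finiteness) ?_
    rintro x ⟨hx, hx_near⟩
    refine exists_rpow_le_atomicMeasure_closedBall hγ hγβ hs hA (fun i => ?_) hx
    simpa using fun h => hx_near (mem_iUnion.2 ⟨i, h⟩)
  have hconst_near : (2 : ℝ≥0∞) ^ γ ≤ 12 ^ γ * s ^ (-(γ / β)) := by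
    have hs_rpow : 1 ≤ s ^ (-(γ / β)) := by
      rw [ENNReal.rpow_neg, ENNReal.one_le_inv]
      exact ENNReal.rpow_le_one hs1 (div_nonneg hγ.le (hγ.le.trans hγβ))
    exact (ENNReal.rpow_le_rpow (by norm_num) hγ.le).trans (le_mul_of_one_le_right' hs_rpow)
  have hconst_far : (6 : ℝ≥0∞) ^ γ * (2 ^ γ * s ^ (-(γ / β))) = 12 ^ γ * s ^ (-(γ / β)) := by
    rw [← mul_assoc, ← ENNReal.mul_rpow_of_nonneg _ _ hγ.le]
    norm_num
  calc _ ≤ hausdorffContent γ (near ∪ far) := measure_mono (by simp [far])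
    _ ≤ _ := (measure_union_le _ _).trans (add_le_add hnear hfar)
    _ ≤ 12 ^ γ * s ^ (-(γ / β)) * (∑' i, (r i : ℝ≥0∞) ^ γ) +
          12 ^ γ * s ^ (-(γ / β)) * ∑' i, (r i : ℝ≥0∞) ^ γ := by
        rw [hconst_far]; gcongr
    _ = _ := by ring

theorem hausdorffContent_lt_maximalDensity_le (hγ : 0 < γ) (hγβ : γ ≤ β) (A : Set X) {s : ℝ≥0∞}
    (hs : s ≠ 0) :
    hausdorffContent γ {x | s < maximalDensity β A x} ≤
      2 * 12 ^ γ * s ^ (-(γ / β)) * hausdorffContent γ A := by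
  rcases isEmpty_or_nonempty X with _ | _
  · simp [eq_empty_of_isEmpty]
  rcases lt_or_ge 1 s with hs1 | hs1
  · simp [((maximalDensity_le_one β A _).trans hs1.le).not_gt]
  have hs_top : s ≠ ∞ := ne_top_of_le_ne_top ENNReal.one_ne_top hs1
  have hs_rpow : s ^ (-(γ / β)) ≠ 0 := (ENNReal.rpow_pos (pos_iff_ne_zero.2 hs) hs_top).ne'
  have hK_zero : 2 * 12 ^ γ * s ^ (-(γ / β)) ≠ 0 := by simp [hs_rpow]
  have hK_top : 2 * 12 ^ γ * s ^ (-(γ / β)) ≠ ∞ := by finiteness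
  rw [mul_comm, ← ENNReal.div_le_iff hK_zero hK_top, hausdorffContent_eq_iInf hγ A]
  refine le_iInf₂ fun c r => le_iInf fun hA => ?_
  rw [ENNReal.div_le_iff hK_zero hK_top, mul_comm]
  by_cases hfin : ∑' i, (r i : ℝ≥0∞) ^ γ = ∞
  · simp [hfin, ENNReal.mul_top hK_zero]
  · exact hausdorffContent_lt_maximalDensity_le_of_cover hγ hγβ hs hs1 hA hfin

end MaximalDensity

section DyadicLayers

lemma iUnion_Ico_zpow {a : ℝ} (ha : 1 < a) : ⋃ k : ℤ, Ico (a ^ k) (a ^ (k + 1)) = Ioi 0 := by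
  ext t
  simp only [mem_iUnion, mem_Ioi]
  exact ⟨fun ⟨k, hk⟩ => (zpow_pos (by linarith) k).trans_le hk.1,
    fun ht => exists_mem_Ico_zpow ht ha⟩

lemma volume_Ico_zpow {a : ℝ≥0} (ha : 1 ≤ a) (k : ℤ) :
    volume (Ico ((a : ℝ) ^ k) ((a : ℝ) ^ (k + 1))) = (a - 1) * (a : ℝ≥0∞) ^ k := by
  have ha0 : a ≠ 0 := (zero_lt_one.trans_le ha).ne'
  have hsub : (a : ℝ) ^ (k + 1) - (a : ℝ) ^ k = ((a - 1) * a ^ k : ℝ≥0) := by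
    push_cast [NNReal.coe_sub ha, zpow_add_one₀ (NNReal.coe_ne_zero.2 ha0)]
    ring
  rw [Real.volume_Ico, hsub, ENNReal.ofReal_coe_nnreal, ENNReal.coe_mul, ENNReal.coe_sub,
    ENNReal.coe_one, ENNReal.coe_zpow ha0]

lemma lintegral_Ioi_le_tsum_zpow {φ : ℝ → ℝ≥0∞} (hφ : Antitone φ) {a : ℝ≥0} (ha : 1 < a) :
    ∫⁻ t in Ioi 0, φ t ≤ (a - 1) * ∑' k : ℤ, (a : ℝ≥0∞) ^ k * φ ((a : ℝ) ^ k) := by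
  rw [← iUnion_Ico_zpow (NNReal.one_lt_coe.2 ha), ← ENNReal.tsum_mul_left]
  refine (lintegral_iUnion_le _ _).trans (ENNReal.tsum_le_tsum fun k => ?_)
  calc ∫⁻ t in Ico ((a : ℝ) ^ k) ((a : ℝ) ^ (k + 1)), φ t
      ≤ ∫⁻ _ in Ico ((a : ℝ) ^ k) ((a : ℝ) ^ (k + 1)), φ ((a : ℝ) ^ k) :=
        setLIntegral_mono' measurableSet_Ico fun t ht => hφ ht.1
    _ = _ := by rw [setLIntegral_const, volume_Ico_zpow ha.le, mul_comm, mul_assoc]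

lemma tsum_zpow_le_lintegral_Ioi {φ : ℝ → ℝ≥0∞} (hφ : Antitone φ) {a : ℝ≥0} (ha : 1 < a) :
    (a - 1) * ∑' k : ℤ, (a : ℝ≥0∞) ^ k * φ ((a : ℝ) ^ k) ≤ a * ∫⁻ t in Ioi 0, φ t := by
  have ha0 : (a : ℝ≥0∞) ≠ 0 := ENNReal.coe_ne_zero.2 (zero_lt_one.trans ha).ne'
  have ha1 : 1 < (a : ℝ) := NNReal.one_lt_coe.2 ha
  have hdisj : Pairwise
      (Function.onFun Disjoint fun k : ℤ => Ico ((a : ℝ) ^ k) ((a : ℝ) ^ (k + 1))) :=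
    (zpow_right_mono₀ ha1.le).pairwise_disjoint_on_Ico_succ
  rw [← iUnion_Ico_zpow ha1, lintegral_iUnion (fun _ => measurableSet_Ico) hdisj,
    ← ENNReal.tsum_mul_left, ← ENNReal.tsum_mul_left, ← (Equiv.addRight (1 : ℤ)).tsum_eq]
  refine ENNReal.tsum_le_tsum fun k => ?_
  calc (a - 1) * ((a : ℝ≥0∞) ^ (k + 1) * φ ((a : ℝ) ^ (k + 1)))
      = a * ∫⁻ _ in Ico ((a : ℝ) ^ k) ((a : ℝ) ^ (k + 1)), φ ((a : ℝ) ^ (k + 1)) := by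
        rw [setLIntegral_const, volume_Ico_zpow ha.le, ENNReal.zpow_add ha0 ENNReal.coe_ne_top,
          zpow_one]
        ring
    _ ≤ _ := by
        gcongr a * ?_
        exact setLIntegral_mono' measurableSet_Ico fun t ht => hφ ht.2.le

variable {X : Type*} {C : Set X → ℝ≥0∞} {p : ℝ}

/-- The dyadic discretization `∑ₖ 2^(pk) C {g > 2^k}` of the Choquet integral of `g ^ p`, which is
comparable to that integral. -/
def dyadicSum (C : Set X → ℝ≥0∞) (p : ℝ) (g : X → ℝ≥0∞) : ℝ≥0∞ :=
  ∑' k : ℤ, (2 ^ p) ^ k * C {x | 2 ^ k < g x}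

lemma antitone_apply_setOf_ofReal_lt (hC : Monotone C) (g : X → ℝ≥0∞) :
    Antitone fun t => C {x | ENNReal.ofReal t < g x} :=
  fun _ _ hst => hC fun _ hx => (ENNReal.ofReal_le_ofReal hst).trans_lt hx

lemma ofReal_two_rpow_zpow_lt_rpow_iff (hp : 0 < p) (k : ℤ) (y : ℝ≥0∞) :
    ENNReal.ofReal (((2 ^ p : ℝ≥0) : ℝ) ^ k) < y ^ p ↔ 2 ^ k < y := by
  have h : ENNReal.ofReal (((2 ^ p : ℝ≥0) : ℝ) ^ k) = (2 ^ k) ^ p := by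
    rw [← NNReal.coe_zpow, ENNReal.ofReal_coe_nnreal, ENNReal.coe_zpow (by positivity),
      ENNReal.coe_rpow_of_nonneg _ hp.le, ENNReal.coe_ofNat, ← ENNReal.rpow_intCast,
      ← ENNReal.rpow_intCast, ← ENNReal.rpow_mul, ← ENNReal.rpow_mul, mul_comm]
  rw [h, ENNReal.rpow_lt_rpow_iff hp]

lemma dyadicSum_eq_tsum (hp : 0 < p) (g : X → ℝ≥0∞) :
    dyadicSum C p g = ∑' k : ℤ, ((2 ^ p : ℝ≥0) : ℝ≥0∞) ^ k *
      C {x | ENNReal.ofReal (((2 ^ p : ℝ≥0) : ℝ) ^ k) < g x ^ p} := by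
  simp only [dyadicSum, ofReal_two_rpow_zpow_lt_rpow_iff hp, ENNReal.coe_rpow_of_nonneg _ hp.le,
    ENNReal.coe_ofNat]

lemma choquet_rpow_le_dyadicSum (hC : Monotone C) (hp : 0 < p) (g : X → ℝ≥0∞) :
    choquet C (fun x => g x ^ p) ≤ (2 ^ p - 1) * dyadicSum C p g := by
  rw [dyadicSum_eq_tsum hp]
  simpa [choquet, ENNReal.coe_rpow_of_nonneg _ hp.le] using lintegral_Ioi_le_tsum_zpow
    (antitone_apply_setOf_ofReal_lt hC fun x => g x ^ p) (NNReal.one_lt_rpow one_lt_two hp)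

lemma dyadicSum_le_choquet_rpow (hC : Monotone C) (hp : 0 < p) (g : X → ℝ≥0∞) :
    (2 ^ p - 1) * dyadicSum C p g ≤ 2 ^ p * choquet C (fun x => g x ^ p) := by
  rw [dyadicSum_eq_tsum hp]
  simpa [choquet, ENNReal.coe_rpow_of_nonneg _ hp.le] using tsum_zpow_le_lintegral_Ioi
    (antitone_apply_setOf_ofReal_lt hC fun x => g x ^ p) (NNReal.one_lt_rpow one_lt_two hp)

lemma tsum_zpow_mul_add (G : ℤ → ℝ≥0∞) {P : ℝ≥0∞} (hP : P ≠ 0) (hP_top : P ≠ ∞) (j : ℤ) :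
    ∑' m : ℤ, P ^ m * G (m + j) = P ^ (-j) * ∑' k : ℤ, P ^ k * G k := by
  rw [← (Equiv.addRight j).tsum_eq fun k => P ^ k * G k, ← ENNReal.tsum_mul_left]
  refine tsum_congr fun m => ?_
  rw [Equiv.coe_addRight, ← mul_assoc, ← ENNReal.zpow_add hP hP_top, neg_add_cancel_comm_assoc]

lemma dyadicSum_le_of_le_tsum {g h : X → ℝ≥0∞} {K b : ℝ≥0∞}
    (hgh : ∀ m : ℤ, C {x | 2 ^ m < h x} ≤
      ∑' l : ℕ, K * b ^ l * C {x | 2 ^ (m + (l - 1)) < g x}) :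
    dyadicSum C p h ≤ K * 2 ^ p * (1 - b / 2 ^ p)⁻¹ * dyadicSum C p g := by
  set P : ℝ≥0∞ := 2 ^ p
  have hP : P ≠ 0 := by simp [P]
  have hP_top : P ≠ ∞ := by simp [P]
  have hzpow (l : ℕ) : P ^ (-((l : ℤ) - 1)) = P * P⁻¹ ^ l := by
    rw [neg_sub, sub_eq_add_neg, ENNReal.zpow_add hP hP_top, zpow_one, ENNReal.zpow_neg,
      zpow_natCast, ENNReal.inv_pow]
  calc dyadicSum C p h
      ≤ ∑' m : ℤ, ∑' l : ℕ, K * b ^ l * (P ^ m * C {x | 2 ^ (m + (l - 1)) < g x}) := by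
        refine ENNReal.tsum_le_tsum fun m => (mul_le_mul_right (hgh m) _).trans_eq ?_
        simp only [← ENNReal.tsum_mul_left, mul_left_comm, P]
    _ = ∑' l : ℕ, K * b ^ l * (P * P⁻¹ ^ l * dyadicSum C p g) := by
        rw [ENNReal.tsum_comm]
        refine tsum_congr fun l => ?_
        rw [ENNReal.tsum_mul_left, tsum_zpow_mul_add (fun k => C {x | 2 ^ k < g x}) hP hP_top,
          hzpow, dyadicSum]
    _ = ∑' l : ℕ, K * P * dyadicSum C p g * (b / P) ^ l :=
        tsum_congr fun l => by rw [div_eq_mul_inv, mul_pow]; ring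
    _ = _ := by rw [ENNReal.tsum_mul_left, ENNReal.tsum_geometric, mul_right_comm]

end DyadicLayers

section ContentMaximal

variable {X : Type*} [PseudoMetricSpace X] {γ β : ℝ}

/-- The centred maximal function of `g` with respect to the `β`-dimensional Hausdorff content, with
averages taken as Choquet integrals. -/
def contentMaximal (β : ℝ) (g : X → ℝ≥0∞) (x : X) : ℝ≥0∞ :=
  ⨆ (r : ℝ≥0) (_ : 0 < r), choquetOn (hausdorffContent β) (ball x r) g / (r : ℝ≥0∞) ^ β

lemma contentMaximal_le_tsum (β : ℝ) (g : X → ℝ≥0∞) (x : X) :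
    contentMaximal β g x ≤ ∑' k : ℤ, 2 ^ k * maximalDensity β {y | 2 ^ k < g y} x := by
  refine iSup₂_le fun r hr => ?_
  have hmono : Monotone fun S => hausdorffContent β (ball x r ∩ S) :=
    fun S T hST => measure_mono (inter_subset_inter_right _ hST)
  have hdyadic := choquet_rpow_le_dyadicSum hmono one_pos g
  simp only [ENNReal.rpow_one, ENNReal.sub_eq_of_eq_add ENNReal.one_ne_top one_add_one_eq_two.symm,
    one_mul] at hdyadic
  calc choquetOn (hausdorffContent β) (ball x r) g / (r : ℝ≥0∞) ^ β
      ≤ dyadicSum (fun S => hausdorffContent β (ball x r ∩ S)) 1 g / (r : ℝ≥0∞) ^ β := by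
        gcongr; exact hdyadic
    _ = ∑' k : ℤ, 2 ^ k *
          (hausdorffContent β (ball x r ∩ {y | 2 ^ k < g y}) / (r : ℝ≥0∞) ^ β) := by
        simp only [dyadicSum, ENNReal.rpow_one, div_eq_mul_inv, ← ENNReal.tsum_mul_right, mul_assoc]
    _ ≤ _ := by
        gcongr with k
        exact le_iSup₂ (f := fun (r : ℝ≥0) (_ : 0 < r) =>
          hausdorffContent β (ball x r ∩ {y | 2 ^ k < g y}) / (r : ℝ≥0∞) ^ β) r hr

/-- The thresholds are chosen so that, weighted by `2 ^ (m - 1 + l)`, they sum to `2 ^ (m - 1)`; the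
terms of index below `m - 1` contribute at most as much again. -/
lemma exists_lt_of_lt_tsum_zpow {u : ℤ → ℝ≥0∞} (hu : ∀ k, u k ≤ 1) (σ : ℝ≥0∞) {m : ℤ}
    (h : 2 ^ m < ∑' k, 2 ^ k * u k) : ∃ l : ℕ, (1 - 2 * σ) * σ ^ l < u (m + (l - 1)) := by
  by_contra! hcon
  have hzpow (j : ℤ) : (2 : ℝ≥0∞) ^ (m - 1 + j) = 2 ^ (m - 1) * 2 ^ j :=
    ENNReal.zpow_add two_ne_zero ENNReal.ofNat_ne_top _ _
  have hnonneg : ∑' l : ℕ, 2 ^ (m - 1 + (l : ℤ)) * u (m - 1 + l) ≤ 2 ^ (m - 1) :=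
    calc _ ≤ ∑' l : ℕ, 2 ^ (m - 1) * ((1 - 2 * σ) * (2 * σ) ^ l) := by
          refine ENNReal.tsum_le_tsum fun l => ?_
          rw [hzpow, zpow_natCast, mul_assoc, mul_pow, mul_left_comm (1 - 2 * σ)]
          gcongr
          simpa only [sub_add_eq_add_sub, add_sub_assoc] using hcon l
      _ = 2 ^ (m - 1) * ((1 - 2 * σ) * (1 - 2 * σ)⁻¹) := by
          rw [ENNReal.tsum_mul_left, ENNReal.tsum_mul_left, ENNReal.tsum_geometric]
      _ ≤ _ := mul_le_of_le_one_right' (ENNReal.mul_inv_le_one _)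
  have hneg : ∑' l : ℕ, 2 ^ (m - 1 + -((l : ℤ) + 1)) * u (m - 1 + -((l : ℤ) + 1)) ≤ 2 ^ (m - 1) :=
    calc _ ≤ ∑' l : ℕ, (2 : ℝ≥0∞) ^ (m - 1) * 2 ^ (-((l : ℤ) + 1)) :=
          ENNReal.tsum_le_tsum fun l => by
            rw [hzpow]; exact mul_le_of_le_one_right' (hu _)
      _ = _ := by
          simp_rw [ENNReal.tsum_mul_left, ← neg_sub_left, ENNReal.tsum_two_zpow_neg_add_one,
            mul_one]
  refine h.not_ge ?_
  calc ∑' k, 2 ^ k * u k ≤ 2 ^ (m - 1) + 2 ^ (m - 1) := by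
        rw [← (Equiv.addLeft (m - 1)).tsum_eq,
          tsum_of_nat_of_neg_add_one ENNReal.summable ENNReal.summable]
        exact add_le_add hnonneg hneg
    _ = 2 ^ m := by simpa [mul_two] using (hzpow 1).symm

lemma hausdorffContent_two_zpow_lt_contentMaximal_le (hγ : 0 < γ) (hγβ : γ ≤ β) {σ : ℝ≥0∞}
    (hσ : σ ≠ 0) (hσ2 : 2 * σ < 1) (g : X → ℝ≥0∞) (m : ℤ) :
    hausdorffContent γ {x | 2 ^ m < contentMaximal β g x} ≤
      ∑' l : ℕ, 2 * 12 ^ γ * (1 - 2 * σ) ^ (-(γ / β)) * (σ ^ (-(γ / β))) ^ l *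
        hausdorffContent γ {x | 2 ^ (m + (l - 1)) < g x} := by
  have hσ_top : σ ≠ ∞ := by rintro rfl; simp at hσ2
  have hσ1 : 1 - 2 * σ ≠ 0 := (tsub_pos_iff_lt.2 hσ2).ne'
  have hrpow (l : ℕ) : ((1 - 2 * σ) * σ ^ l) ^ (-(γ / β)) =
      (1 - 2 * σ) ^ (-(γ / β)) * (σ ^ (-(γ / β))) ^ l := by
    rw [ENNReal.mul_rpow_of_ne_top (by finiteness) (by finiteness), ← ENNReal.rpow_natCast,
      ← ENNReal.rpow_natCast, ← ENNReal.rpow_mul, ← ENNReal.rpow_mul, mul_comm (l : ℝ)]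
  calc hausdorffContent γ {x | 2 ^ m < contentMaximal β g x}
      ≤ hausdorffContent γ (⋃ l : ℕ, {x | (1 - 2 * σ) * σ ^ l <
          maximalDensity β {y | 2 ^ (m + (l - 1 : ℤ)) < g y} x}) := by
        refine measure_mono fun x (hx : 2 ^ m < contentMaximal β g x) => ?_
        obtain ⟨l, hl⟩ := exists_lt_of_lt_tsum_zpow (fun k => maximalDensity_le_one β _ x) σ
          (hx.trans_le (contentMaximal_le_tsum β g x))
        exact mem_iUnion.2 ⟨l, hl⟩
    _ ≤ _ := measure_iUnion_le _
    _ ≤ _ := by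
        refine ENNReal.tsum_le_tsum fun l => ?_
        refine (hausdorffContent_lt_maximalDensity_le hγ hγβ _
          (mul_ne_zero hσ1 (pow_ne_zero l hσ))).trans_eq ?_
        rw [hrpow]; ring

lemma exists_dyadicSum_contentMaximal_le {p : ℝ} (hγ : 0 < γ) (hγβ : γ ≤ β) (hp : γ / β < p) :
    ∃ L : ℝ≥0∞, L ≠ ∞ ∧ ∀ (X : Type*) [PseudoMetricSpace X] (g : X → ℝ≥0∞),
      dyadicSum (hausdorffContent γ) p (contentMaximal β g) ≤
        L * dyadicSum (hausdorffContent γ) p g := by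
  have hq : 0 < γ / β := div_pos hγ (hγ.trans_le hγβ)
  obtain ⟨e, he1, hep⟩ := exists_between ((one_lt_div hq).2 hp)
  set σ : ℝ≥0∞ := 2 ^ (-e)
  have hσ : σ ≠ 0 := by simp [σ]
  have hσ2 : 2 * σ < 1 := by
    rw [← ENNReal.rpow_one 2, ← ENNReal.rpow_add _ _ (by simp) (by simp)]
    exact ENNReal.rpow_lt_one_of_one_lt_of_neg ENNReal.one_lt_two (by linarith)
  have hb : σ ^ (-(γ / β)) / 2 ^ p < 1 := by
    rw [ENNReal.div_lt_iff (by simp) (by simp), one_mul, ← ENNReal.rpow_mul, neg_mul_neg]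
    exact ENNReal.rpow_lt_rpow_of_exponent_lt ENNReal.one_lt_two (by simp) ((lt_div_iff₀ hq).1 hep)
  have hσ1 : 1 - 2 * σ ≠ 0 := (tsub_pos_iff_lt.2 hσ2).ne'
  have hden : 1 - σ ^ (-(γ / β)) / 2 ^ p ≠ 0 := (tsub_pos_iff_lt.2 hb).ne'
  exact ⟨2 * 12 ^ γ * (1 - 2 * σ) ^ (-(γ / β)) * 2 ^ p * (1 - σ ^ (-(γ / β)) / 2 ^ p)⁻¹,
    by finiteness, fun X _ g => dyadicSum_le_of_le_tsum
      (hausdorffContent_two_zpow_lt_contentMaximal_le hγ hγβ hσ hσ2 g)⟩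

end ContentMaximal

section Normalization

variable {n : ℕ} {β : ℝ}

lemma omegaC_ne_zero (hβ : 0 < β) : omegaC β ≠ 0 := by
  rw [omegaC, Ne, ENNReal.ofReal_eq_zero, not_le]
  have := Real.Gamma_pos_of_pos (show 0 < β / 2 + 1 by linarith)
  positivity

lemma omegaC_ne_top (β : ℝ) : omegaC β ≠ ∞ := ENNReal.ofReal_ne_top

lemma hContent_eq_omegaC_mul_hausdorffContent (hβ : 0 < β) (E : Set (Rn n)) :
    hContent n β E = omegaC β * hausdorffContent β E := by
  refine le_antisymm ?_ (le_iInf₂ fun c hc => ?_)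
  · simp only [hausdorffContent_eq_iInf hβ, ENNReal.mul_iInf_of_ne (omegaC_ne_zero hβ)
      (omegaC_ne_top β)]
    refine le_iInf₂ fun c r => le_iInf fun hE => iInf₂_le_of_le (fun i => (c i, r i)) hE ?_
    simp [← ENNReal.tsum_mul_left, ← ENNReal.ofReal_rpow_of_nonneg, hβ.le]
  · have hrpow (i : ℕ) : ((c i).2.toNNReal : ℝ≥0∞) ^ β ≤ ENNReal.ofReal ((c i).2 ^ β) := by
      rcases le_total 0 (c i).2 with hr | hr
      · exact (ENNReal.ofReal_rpow_of_nonneg hr hβ.le).le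
      · -- the real power of a negative radius is a junk value, but its ball is empty
        simp [Real.toNNReal_of_nonpos hr, hβ]
    have hE : E ⊆ ⋃ i, ball (c i).1 (c i).2.toNNReal :=
      hc.trans (iUnion_mono fun i => ball_subset_ball (Real.le_coe_toNNReal _))
    rw [ENNReal.tsum_mul_left]
    gcongr
    exact (hausdorffContent_le_tsum β hE).trans (ENNReal.tsum_le_tsum hrpow)

lemma choquet_hContent (hβ : 0 < β) (g : Rn n → ℝ≥0∞) :
    choquet (hContent n β) g = omegaC β * choquet (hausdorffContent β) g := by
  simp only [choquet, hContent_eq_omegaC_mul_hausdorffContent hβ,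
    lintegral_const_mul' _ _ (omegaC_ne_top β)]

lemma choquetOn_hContent (hβ : 0 < β) (A : Set (Rn n)) (g : Rn n → ℝ≥0∞) :
    choquetOn (hContent n β) A g = omegaC β * choquetOn (hausdorffContent β) A g := by
  simp only [choquetOn, hContent_eq_omegaC_mul_hausdorffContent hβ,
    lintegral_const_mul' _ _ (omegaC_ne_top β)]

lemma maximalH_eq_contentMaximal (hβ : 0 < β) (g : Rn n → ℝ≥0∞) (x : Rn n) :
    maximalH n β g x = contentMaximal β g x := by
  have haverage (r : ℝ≥0) : (omegaC β * ENNReal.ofReal ((r : ℝ) ^ β))⁻¹ *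
      choquetOn (hContent n β) (ball x r) g =
        choquetOn (hausdorffContent β) (ball x r) g / (r : ℝ≥0∞) ^ β := by
    rw [choquetOn_hContent hβ, ← ENNReal.ofReal_rpow_of_nonneg r.coe_nonneg hβ.le,
      ENNReal.ofReal_coe_nnreal, mul_comm, ← div_eq_mul_inv,
      ENNReal.mul_div_mul_left _ _ (omegaC_ne_zero hβ) (omegaC_ne_top β)]
  refine le_antisymm (iSup₂_le fun r hr => ?_) (iSup₂_le fun r hr => ?_)
  · lift r to ℝ≥0 using hr.le
    rw [haverage]
    exact le_iSup₂_of_le r hr le_rfl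
  · rw [← haverage]
    exact le_iSup₂_of_le (r : ℝ) hr le_rfl

end Normalization

theorem statement10_general {γ β p : ℝ} (hγ : 0 < γ) (hγβ : γ ≤ β) (hp : γ / β < p) :
    ∃ C : ℝ, 0 < C ∧ ∀ (X : Type*) [PseudoMetricSpace X] (g : X → ℝ≥0∞),
      choquet (hausdorffContent γ) (fun x => contentMaximal β g x ^ p) ≤
        ENNReal.ofReal C * choquet (hausdorffContent γ) (fun x => g x ^ p) := by
  have hp0 : 0 < p := (div_pos hγ (hγ.trans_le hγβ)).trans hp
  obtain ⟨L, hL, hdyadic⟩ := exists_dyadicSum_contentMaximal_le hγ hγβ hp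
  obtain ⟨N, hN⟩ := ENNReal.exists_nat_gt (ENNReal.mul_ne_top hL (by finiteness : 2 ^ p ≠ ∞))
  refine ⟨N, Nat.cast_pos.2 (Nat.cast_pos.1 (pos_of_gt hN)), fun X _ g => ?_⟩
  have hmono : Monotone (hausdorffContent (X := X) γ) := fun _ _ => measure_mono
  calc choquet (hausdorffContent γ) (fun x => contentMaximal β g x ^ p)
      ≤ (2 ^ p - 1) * dyadicSum (hausdorffContent γ) p (contentMaximal β g) :=
        choquet_rpow_le_dyadicSum hmono hp0 _
    _ ≤ (2 ^ p - 1) * (L * dyadicSum (hausdorffContent γ) p g) := by gcongr; exact hdyadic X g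
    _ = L * ((2 ^ p - 1) * dyadicSum (hausdorffContent γ) p g) := mul_left_comm ..
    _ ≤ L * (2 ^ p * choquet (hausdorffContent γ) (fun x => g x ^ p)) := by
        gcongr L * ?_; exact dyadicSum_le_choquet_rpow hmono hp0 g
    _ ≤ _ := by
        rw [← mul_assoc, ENNReal.ofReal_natCast]
        gcongr

/-- Strong-type bound for `p > γ/β`:
`∫ (M_{H^β_∞} f)^p dH^γ_∞ ≤ C ∫ |f|^p dH^γ_∞` for `f ∈ L^p(H^γ_∞)`. -/
theorem statement10 (n : ℕ) (γ β p : ℝ) (hγ : 0 < γ) (hγβ : γ < β) (hβn : β ≤ n)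
    (hp : γ / β < p) :
    ∃ C : ℝ, 0 < C ∧ ∀ f : Rn n → ℝ, MemChoquetLp (hContent n γ) p f →
      choquet (hContent n γ)
          (fun x => (maximalH n β (fun y => ENNReal.ofReal |f y|) x) ^ p) ≤
        ENNReal.ofReal C * choquet (hContent n γ) (fun x => ENNReal.ofReal |f x| ^ p) := by
  obtain ⟨C, hC, hbound⟩ := statement10_general hγ hγβ.le hp
  refine ⟨C, hC, fun f _ => ?_⟩
  simp only [choquet_hContent hγ, maximalH_eq_contentMaximal (hγ.trans hγβ)]
  rw [mul_left_comm]
  gcongr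
  exact hbound (Rn n) _

end
end
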